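/- arXiv:1104.4534 — 5 statements merged into one kernel-verified Lean document; each statement's English description precedes it below -/
import Mathlib

section
/- (Monotonicity Property 1.) Assume H_i(x,p) = F_i(x,p) − f_i(x) with F_i, f_i satisfying (A1)–(A5), and let (u₁, u₂) be the viscosity solution of (C) with Lipschitz continuous initial data (u₀₁, u₀₂). Set U(x,t) := u₁(x,t) + u₂(x,t). Then for every x ∈ 𝒜, the function t ↦ U(x,t) is nonincreasing on [0,∞). -/
open MeasureTheory Filter Topology Set

noncomputable section

/-- Euclidean space `ℝ^n`; the torus `𝕋^n` is modelled by `ℤ^n`-periodic functions on it. -/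
abbrev En (n : ℕ) : Type := EuclideanSpace ℝ (Fin n)

/-- The integer vector `k ∈ ℤ^n` viewed as an element of `ℝ^n`. -/
def intVec (n : ℕ) (k : Fin n → ℤ) : En n := WithLp.toLp 2 (fun i => (k i : ℝ))

/-- A `ℤ^n`-periodic function on `ℝ^n`, i.e. a function on the torus `𝕋^n`. -/
def ZPeriodic {n : ℕ} (f : En n → ℝ) : Prop :=
  ∀ (x : En n) (k : Fin n → ℤ), f (x + intVec n k) = f x

/-- A Hamiltonian `H : 𝕋^n × ℝ^n → ℝ` (periodic in the first variable). -/
def ZPeriodicH {n : ℕ} (H : En n → En n → ℝ) : Prop :=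
  ∀ (x : En n) (k : Fin n → ℤ) (p : En n), H (x + intVec n k) p = H x p

/-- A function on `𝕋^n × ℝ` (space-time, periodic in space). -/
def ZPeriodicST {n : ℕ} (u : En n × ℝ → ℝ) : Prop :=
  ∀ (x : En n) (k : Fin n → ℤ) (t : ℝ), u (x + intVec n k, t) = u (x, t)

/-- (A1): coercivity, `lim_{r→∞} inf{H(x,p) : x ∈ 𝕋^n, |p| ≥ r} = ∞`. -/
def Coercive {n : ℕ} (H : En n → En n → ℝ) : Prop :=
  ∀ M : ℝ, ∃ r : ℝ, ∀ (x p : En n), r ≤ ‖p‖ → M ≤ H x p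

/-- Coercivity for an `x`-independent Hamiltonian. -/
def CoerciveP {n : ℕ} (H : En n → ℝ) : Prop :=
  ∀ M : ℝ, ∃ r : ℝ, ∀ p : En n, r ≤ ‖p‖ → M ≤ H p

/-- Lipschitz continuity (membership in `W^{1,∞}`). -/
def IsLip {n : ℕ} (f : En n → ℝ) : Prop := ∃ K : NNReal, LipschitzWith K f

/-- Viscosity subsolution inequality for one stationary equation
`H(x, Dw) + c (w - wo) ≤ ρ(x)` of a weakly coupled system. -/
def StatSubIneq {n : ℕ} (H : En n → En n → ℝ) (c : ℝ) (w wo : En n → ℝ) (ρ : En n → ℝ) : Prop :=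
  ∀ φ : En n → ℝ, ContDiff ℝ 1 φ →
    ∀ x₀ : En n, IsLocalMax (fun x => w x - φ x) x₀ →
      H x₀ (gradient φ x₀) + c * (w x₀ - wo x₀) ≤ ρ x₀

/-- Viscosity supersolution inequality for one stationary equation. -/
def StatSuperIneq {n : ℕ} (H : En n → En n → ℝ) (c : ℝ) (w wo : En n → ℝ) (ρ : En n → ℝ) : Prop :=
  ∀ φ : En n → ℝ, ContDiff ℝ 1 φ →
    ∀ x₀ : En n, IsLocalMin (fun x => w x - φ x) x₀ →
      ρ x₀ ≤ H x₀ (gradient φ x₀) + c * (w x₀ - wo x₀)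

/-- Viscosity subsolution of the stationary system
`Hᵢ(x, Dwᵢ) + cᵢ (wᵢ - wⱼ) = ρᵢ(x)`, `i = 1,2`. -/
def CellSub {n : ℕ} (H₁ H₂ : En n → En n → ℝ) (c₁ c₂ : ℝ) (w₁ w₂ : En n → ℝ)
    (ρ₁ ρ₂ : En n → ℝ) : Prop :=
  StatSubIneq H₁ c₁ w₁ w₂ ρ₁ ∧ StatSubIneq H₂ c₂ w₂ w₁ ρ₂

/-- Viscosity supersolution of the stationary system. -/
def CellSuper {n : ℕ} (H₁ H₂ : En n → En n → ℝ) (c₁ c₂ : ℝ) (w₁ w₂ : En n → ℝ)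
    (ρ₁ ρ₂ : En n → ℝ) : Prop :=
  StatSuperIneq H₁ c₁ w₁ w₂ ρ₁ ∧ StatSuperIneq H₂ c₂ w₂ w₁ ρ₂

/-- Viscosity solution (continuous, sub- and supersolution) of the stationary system. -/
def CellSolution {n : ℕ} (H₁ H₂ : En n → En n → ℝ) (c₁ c₂ : ℝ) (v₁ v₂ : En n → ℝ)
    (ρ₁ ρ₂ : En n → ℝ) : Prop :=
  Continuous v₁ ∧ Continuous v₂ ∧
    CellSub H₁ H₂ c₁ c₂ v₁ v₂ ρ₁ ρ₂ ∧ CellSuper H₁ H₂ c₁ c₂ v₁ v₂ ρ₁ ρ₂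

/-- Subsolution of the ergodic problem (E) with constant `c` (coupling constants 1). -/
def ErgSub {n : ℕ} (H₁ H₂ : En n → En n → ℝ) (v₁ v₂ : En n → ℝ) (c : ℝ) : Prop :=
  CellSub H₁ H₂ 1 1 v₁ v₂ (fun _ => c) (fun _ => c)

/-- Supersolution of the ergodic problem (E). -/
def ErgSuper {n : ℕ} (H₁ H₂ : En n → En n → ℝ) (v₁ v₂ : En n → ℝ) (c : ℝ) : Prop :=
  CellSuper H₁ H₂ 1 1 v₁ v₂ (fun _ => c) (fun _ => c)

/-- Viscosity solution of the ergodic problem (E):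
`H₁(x,Dv₁) + v₁ - v₂ = c`, `H₂(x,Dv₂) + v₂ - v₁ = c` on `𝕋^n`. -/
def ErgSolution {n : ℕ} (H₁ H₂ : En n → En n → ℝ) (v₁ v₂ : En n → ℝ) (c : ℝ) : Prop :=
  CellSolution H₁ H₂ 1 1 v₁ v₂ (fun _ => c) (fun _ => c)

/-- Viscosity subsolution inequality for one evolution equation
`∂ₜ u + H(x, Du) + u - uo ≤ 0` in `𝕋^n × (0,∞)`. -/
def EvolSubIneq {n : ℕ} (H : En n → En n → ℝ) (u uo : En n × ℝ → ℝ) : Prop :=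
  ∀ φ : En n × ℝ → ℝ, ContDiff ℝ 1 φ →
    ∀ (x₀ : En n) (t₀ : ℝ), 0 < t₀ →
      IsLocalMax (fun q => u q - φ q) (x₀, t₀) →
      fderiv ℝ φ (x₀, t₀) (0, 1) + H x₀ (gradient (fun y => φ (y, t₀)) x₀)
        + u (x₀, t₀) - uo (x₀, t₀) ≤ 0

/-- Viscosity supersolution inequality for one evolution equation. -/
def EvolSuperIneq {n : ℕ} (H : En n → En n → ℝ) (u uo : En n × ℝ → ℝ) : Prop :=
  ∀ φ : En n × ℝ → ℝ, ContDiff ℝ 1 φ →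
    ∀ (x₀ : En n) (t₀ : ℝ), 0 < t₀ →
      IsLocalMin (fun q => u q - φ q) (x₀, t₀) →
      0 ≤ fderiv ℝ φ (x₀, t₀) (0, 1) + H x₀ (gradient (fun y => φ (y, t₀)) x₀)
        + u (x₀, t₀) - uo (x₀, t₀)

/-- Viscosity subsolution of system (C) (with coupling constants `c₁ = c₂ = 1`). -/
def SysSub {n : ℕ} (H₁ H₂ : En n → En n → ℝ) (u₁ u₂ : En n × ℝ → ℝ) : Prop :=
  EvolSubIneq H₁ u₁ u₂ ∧ EvolSubIneq H₂ u₂ u₁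

/-- Viscosity supersolution of system (C). -/
def SysSuper {n : ℕ} (H₁ H₂ : En n → En n → ℝ) (u₁ u₂ : En n × ℝ → ℝ) : Prop :=
  EvolSuperIneq H₁ u₁ u₂ ∧ EvolSuperIneq H₂ u₂ u₁

/-- Viscosity solution of the Cauchy problem (C): continuous on `𝕋^n × [0,∞)`,
sub- and supersolution, attaining the initial data. -/
def SysSolution {n : ℕ} (H₁ H₂ : En n → En n → ℝ) (u₀₁ u₀₂ : En n → ℝ)
    (u₁ u₂ : En n × ℝ → ℝ) : Prop :=
  ContinuousOn u₁ {q : En n × ℝ | 0 ≤ q.2} ∧ ContinuousOn u₂ {q : En n × ℝ | 0 ≤ q.2} ∧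
    SysSub H₁ H₂ u₁ u₂ ∧ SysSuper H₁ H₂ u₁ u₂ ∧
    (∀ x, u₁ (x, 0) = u₀₁ x) ∧ (∀ x, u₂ (x, 0) = u₀₂ x)

/-- Viscosity subsolution of the single stationary equation `H(x,Dv) ≤ c` on `𝕋^n`. -/
def SingleSub {n : ℕ} (H : En n → En n → ℝ) (v : En n → ℝ) (c : ℝ) : Prop :=
  ∀ φ : En n → ℝ, ContDiff ℝ 1 φ →
    ∀ x₀ : En n, IsLocalMax (fun x => v x - φ x) x₀ → H x₀ (gradient φ x₀) ≤ c

/-- Viscosity supersolution of the single stationary equation `H(x,Dv) ≥ c` on `𝕋^n`. -/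
def SingleSuper {n : ℕ} (H : En n → En n → ℝ) (v : En n → ℝ) (c : ℝ) : Prop :=
  ∀ φ : En n → ℝ, ContDiff ℝ 1 φ →
    ∀ x₀ : En n, IsLocalMin (fun x => v x - φ x) x₀ → c ≤ H x₀ (gradient φ x₀)

/-- Viscosity solution of the single stationary equation `H(x,Dv) = c` on `𝕋^n`. -/
def SingleSolution {n : ℕ} (H : En n → En n → ℝ) (v : En n → ℝ) (c : ℝ) : Prop :=
  Continuous v ∧ SingleSub H v c ∧ SingleSuper H v c

/-- Uniform convergence `u(·,t) → v` on `𝕋^n` as `t → ∞`. -/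
def UnifTendsTo {n : ℕ} (u : En n × ℝ → ℝ) (v : En n → ℝ) : Prop :=
  ∀ ε : ℝ, 0 < ε → ∃ T : ℝ, ∀ t : ℝ, T ≤ t → ∀ x : En n, |u (x, t) - v x| ≤ ε

/-- (A8)⁺ at level `η` with constant `ψ`. -/
def A8plusAt {n : ℕ} (H : En n → En n → ℝ) (η ψ : ℝ) : Prop :=
  ∀ (x p q : En n), η ≤ H x (p + q) → H x q ≤ 0 →
    ∀ μ : ℝ, 0 < μ → μ ≤ 1 → H x (p + q) + ψ * (1 - μ) ≤ μ * H x (μ⁻¹ • p + q)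

/-- (A8)⁻ at level `η` with constant `ψ`. -/
def A8minusAt {n : ℕ} (H : En n → En n → ℝ) (η ψ : ℝ) : Prop :=
  ∀ (x p q : En n), H x (p + q) ≤ -η → 0 ≤ H x q →
    ∀ μ : ℝ, 1 ≤ μ → μ * H x (μ⁻¹ • p + q) ≤ H x (p + q) - ψ * (μ - 1) / μ

/-- (A8)⁺ with threshold `η₀`. -/
def A8plus {n : ℕ} (H : En n → En n → ℝ) (η₀ : ℝ) : Prop :=
  ∀ η : ℝ, 0 < η → η ≤ η₀ → ∃ ψ : ℝ, 0 < ψ ∧ A8plusAt H η ψ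

/-- (A8)⁻ with threshold `η₀`. -/
def A8minus {n : ℕ} (H : En n → En n → ℝ) (η₀ : ℝ) : Prop :=
  ∀ η : ℝ, 0 < η → η ≤ η₀ → ∃ ψ : ℝ, 0 < ψ ∧ A8minusAt H η ψ

/-- The function `F` of the Key Lemma: `F(r) = C r` for `r ≥ 0`, `F(r) = r / C` for `r < 0`. -/
def Fc (C r : ℝ) : ℝ := if 0 ≤ r then C * r else r / C

/-- `α_η⁺(s)` (resp. `β_η⁺(s)` with `u = u₂`):
`min_{x ∈ 𝕋^n, t ≥ s} (u(x,t) - v(x) + η (t-s)) / (u(x,s) - v(x))`. -/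
def alphaPlus {n : ℕ} (u : En n × ℝ → ℝ) (v : En n → ℝ) (η s : ℝ) : ℝ :=
  sInf {r : ℝ | ∃ (x : En n) (t : ℝ), s ≤ t ∧
    r = (u (x, t) - v x + η * (t - s)) / (u (x, s) - v x)}

/-- `α_η⁻(s)` (resp. `β_η⁻(s)` with `u = u₂`):
`max_{x ∈ 𝕋^n, t ≥ s} (u(x,t) - v(x) - η (t-s)) / (u(x,s) - v(x))`. -/
def alphaMinus {n : ℕ} (u : En n × ℝ → ℝ) (v : En n → ℝ) (η s : ℝ) : ℝ :=
  sSup {r : ℝ | ∃ (x : En n) (t : ℝ), s ≤ t ∧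
    r = (u (x, t) - v x - η * (t - s)) / (u (x, s) - v x)}

/-- (A9)⁺. -/
def A9plus {n : ℕ} (H : En n → En n → ℝ) : Prop :=
  ∃ K : Set (En n), IsClosed K ∧ (∀ x ∈ K, ∀ k : Fin n → ℤ, x + intVec n k ∈ K) ∧
    (∀ x ∈ K, (∀ p : En n, 0 ≤ H x p) ∧ ∃ p : En n, H x p = 0) ∧
    (∀ ε : ℝ, 0 < ε → ∃ η₀ : ℝ, 0 < η₀ ∧ ∃ ψ : ℝ → ℝ, (∀ r : ℝ, 0 < r → 0 < ψ r) ∧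
      ∀ η : ℝ, 0 < η → η ≤ η₀ → ∀ (x p q : En n), ε ≤ Metric.infDist x K →
        η ≤ H x (p + q) → H x q ≤ 0 →
        ∀ μ : ℝ, 0 < μ → μ ≤ 1 → H x (p + q) + ψ η * (1 - μ) ≤ μ * H x (μ⁻¹ • p + q))

/-- (A9)⁻. -/
def A9minus {n : ℕ} (H : En n → En n → ℝ) : Prop :=
  ∃ K : Set (En n), IsClosed K ∧ (∀ x ∈ K, ∀ k : Fin n → ℤ, x + intVec n k ∈ K) ∧
    (∀ x ∈ K, (∀ p : En n, 0 ≤ H x p) ∧ ∃ p : En n, H x p = 0) ∧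
    (∀ ε : ℝ, 0 < ε → ∃ η₀ : ℝ, 0 < η₀ ∧ ∃ ψ : ℝ → ℝ, (∀ r : ℝ, 0 < r → 0 < ψ r) ∧
      ∀ η : ℝ, 0 < η → η ≤ η₀ → ∀ (x p q : En n), ε ≤ Metric.infDist x K →
        H x (p + q) ≤ -η → 0 ≤ H x q →
        ∀ μ : ℝ, 1 ≤ μ → μ * H x (μ⁻¹ • p + q) ≤ H x (p + q) - ψ η * (μ - 1) / μ)

/-- (A6): uniform convexity of an `x`-independent Hamiltonian. -/
def UnifConvex {n : ℕ} (H : En n → ℝ) : Prop :=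
  ∃ α : ℝ, 0 < α ∧ ∀ᵐ q : En n ∂volume, DifferentiableAt ℝ H q ∧
    ∀ p : En n, H q + fderiv ℝ H q (p - q) + α * ‖p - q‖ ^ 2 ≤ H p

end

lemma key_ineq {n : ℕ} (F : En n → En n → ℝ) (f : En n → ℝ) (u uo : En n × ℝ → ℝ)
    (hF : ∀ x p, 0 ≤ F x p) (hf : Continuous f)
    (hu : ContinuousOn u {q : En n × ℝ | 0 ≤ q.2})
    (huo : ContinuousOn uo {q : En n × ℝ | 0 ≤ q.2})
    (hsub : EvolSubIneq (fun x p => F x p - f x) u uo) (x : En n) (a b : ℝ) (ha : 0 ≤ a)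
    (hab : a ≤ b) :
    u (x, b) - u (x, a) ≤ ∫ t in a..b, (f x + uo (x, max t 0) - u (x, max t 0)) := by
  have hproj : Continuous (fun q : En n × ℝ => (q.1, max q.2 0)) := by fun_prop
  have hmem : ∀ q : En n × ℝ, (q.1, max q.2 0) ∈ {q : En n × ℝ | 0 ≤ q.2} := by
    intro q; simp
  have hv : Continuous (fun q : En n × ℝ => u (q.1, max q.2 0)) :=
    hu.comp_continuous hproj hmem
  have hvo : Continuous (fun q : En n × ℝ => uo (q.1, max q.2 0)) :=
    huo.comp_continuous hproj hmem
  set k : En n × ℝ → ℝ := fun q => f q.1 + uo (q.1, max q.2 0) - u (q.1, max q.2 0) with hk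
  have hkc : Continuous k := by
    have : Continuous (fun q : En n × ℝ => f q.1) := hf.comp continuous_fst
    exact (this.add hvo).sub hv
  have hhc : Continuous (fun t : ℝ => k (x, t)) := hkc.comp (by fun_prop)
  set I : ℝ → ℝ := fun t => ∫ s in a..t, k (x, s) with hI
  have hId : ∀ t, HasDerivAt I (k (x, t)) t := fun t =>
    intervalIntegral.integral_hasDerivAt_right (hhc.intervalIntegrable _ _)
      (hhc.stronglyMeasurableAtFilter _ _) hhc.continuousAt
  have hI1 : ContDiff ℝ 1 I := by
    rw [contDiff_one_iff_deriv]
    refine ⟨fun t => (hId t).differentiableAt, ?_⟩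
    have : deriv I = fun t => k (x, t) := funext fun t => (hId t).deriv
    rw [this]; exact hhc
  have hIa : I a = 0 := by simp [hI]
  change u (x, b) - u (x, a) ≤ I b
  by_contra hcon
  push Not at hcon
  set δ : ℝ := (u (x, b) - u (x, a) - I b) / 2 with hδ
  have hδ0 : 0 < δ := by rw [hδ]; linarith
  set D : ℝ := |(u (x, b + 1) - I (b + 1)) - (u (x, b) - I b)| with hD
  set K : ℝ := D / δ + 1 with hK
  have hK0 : 0 < K := by positivity
  set ψ : ℝ → ℝ := fun t => δ * Real.exp (K * (t - b)) with hψ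
  have hψ1 : ContDiff ℝ 1 ψ := by rw [hψ]; fun_prop
  have hψd : ∀ t, HasDerivAt ψ (δ * (Real.exp (K * (t - b)) * K)) t := by
    intro t
    have h1 : HasDerivAt (fun t : ℝ => K * (t - b)) K t := by
      simpa using ((hasDerivAt_id t).sub_const b).const_mul K
    exact (h1.exp).const_mul δ
  set m : ℝ := δ * (Real.exp (K * (a - b)) * K) with hm
  have hm0 : 0 < m := by positivity
  have hmle : ∀ t, a ≤ t → m ≤ δ * (Real.exp (K * (t - b)) * K) := by
    intro t ht; rw [hm]; gcongr
  set w : En n × ℝ → ℝ := fun q => u (q.1, max q.2 0) - I q.2 - ψ q.2 with hw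
  have hwc : Continuous w :=
    (hv.sub (hI1.continuous.comp continuous_snd)).sub (hψ1.continuous.comp continuous_snd)
  have hb0 : 0 ≤ b := ha.trans hab
  have hwa : w (x, a) < w (x, b) := by
    have : 0 < ψ a := by positivity
    have h2 : ψ b = δ := by simp [hψ]
    simp only [hw, max_eq_left ha, max_eq_left hb0, hIa, h2]
    linarith
  have hwb : w (x, b + 1) < w (x, b) := by
    have h2 : ψ b = δ := by simp [hψ]
    have h3 : ψ (b + 1) = δ * Real.exp K := by simp [hψ]
    have h4 : δ * (K + 1) ≤ δ * Real.exp K := by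
      gcongr; exact Real.add_one_le_exp K
    have h5 : δ * (K + 1) = D + 2 * δ := by rw [hK]; field_simp; ring
    have h6 := le_abs_self ((u (x, b + 1) - I (b + 1)) - (u (x, b) - I b))
    rw [← hD] at h6
    simp only [hw, max_eq_left (by linarith : (0:ℝ) ≤ b + 1), max_eq_left hb0, h2, h3]
    linarith
  have e1 : ∀ᶠ y in 𝓝 x, w (y, a) < w (x, b) := by
    have hc : ContinuousAt (fun y => w (y, a)) x := by
      apply Continuous.continuousAt; exact hwc.comp (by fun_prop)
    exact hc.eventually (gt_mem_nhds hwa)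
  have e2 : ∀ᶠ y in 𝓝 x, w (y, b + 1) < w (x, b) := by
    have hc : ContinuousAt (fun y => w (y, b + 1)) x := by
      apply Continuous.continuousAt; exact hwc.comp (by fun_prop)
    exact hc.eventually (gt_mem_nhds hwb)
  have e3 : ∀ᶠ y in 𝓝 x, ∀ t ∈ Icc a (b + 1), k (y, t) - k (x, t) < m := by
    apply (isCompact_Icc (a := a) (b := b + 1)).eventually_forall_of_forall_eventually
    intro t _
    have hc : ContinuousAt (fun z : En n × ℝ => k (z.1, z.2) - k (x, z.2)) (x, t) := by
      apply Continuous.continuousAt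
      exact hkc.sub (hhc.comp continuous_snd)
    exact hc.eventually (gt_mem_nhds (by simpa using hm0))
  obtain ⟨r, hr0, hr⟩ := Metric.nhds_basis_closedBall.eventually_iff.mp ((e1.and e2).and e3)
  set S : Set (En n × ℝ) := Metric.closedBall x r ×ˢ Icc a (b + 1) with hS
  have hSc : IsCompact S := (isCompact_closedBall x r).prod isCompact_Icc
  have hxb : (x, b) ∈ S := ⟨Metric.mem_closedBall_self hr0.le, hab, by linarith⟩
  obtain ⟨C, hC⟩ := hSc.bddAbove_image hwc.continuousOn
  have hC' : ∀ q ∈ S, w q ≤ C := fun q hq => hC (mem_image_of_mem w hq)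
  set N : ℝ := (C - w (x, b) + 1) / r ^ 2 with hN
  have hNr : N * r ^ 2 = C - w (x, b) + 1 := by rw [hN]; field_simp
  have hN0 : 0 ≤ N := by
    have := hC' _ hxb
    rw [hN]; apply div_nonneg <;> [linarith; positivity]
  have hwNc : Continuous (fun q : En n × ℝ => w q - N * ‖q.1 - x‖ ^ 2) := by
    fun_prop
  obtain ⟨⟨y, t⟩, hyS, hmax⟩ := hSc.exists_isMaxOn ⟨_, hxb⟩ hwNc.continuousOn
  have hge : w (x, b) ≤ w (y, t) - N * ‖y - x‖ ^ 2 := by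
    have := hmax hxb; simpa using this
  obtain ⟨hyr, hta, htb⟩ := hyS
  simp only at hyr hta htb
  obtain ⟨⟨hy1, hy2⟩, hy3⟩ := hr hyr
  have hp : 0 ≤ N * ‖y - x‖ ^ 2 := by positivity
  have hta' : a < t := lt_of_le_of_ne hta (by rintro rfl; linarith)
  have htb' : t < b + 1 := lt_of_le_of_ne htb (by rintro rfl; linarith)
  have hyr' : y ∈ Metric.ball x r := by
    rw [Metric.mem_ball]
    refine lt_of_le_of_ne hyr ?_
    intro h
    rw [dist_eq_norm] at h
    rw [h, hNr] at hge
    have := hC' (y, t) ⟨hyr, hta, htb⟩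
    linarith
  have ht0 : 0 < t := lt_of_le_of_lt ha hta'
  set φ : En n × ℝ → ℝ := fun q => (I q.2 + ψ q.2) + N * ‖q.1 - x‖ ^ 2 with hφ
  have hφ1 : ContDiff ℝ 1 φ := by
    have h1 : ContDiff ℝ 1 (fun q : En n × ℝ => ‖q.1 - x‖ ^ 2) :=
      (contDiff_fst.sub contDiff_const).norm_sq ℝ
    exact ((hI1.comp contDiff_snd).add (hψ1.comp contDiff_snd)).add (contDiff_const.mul h1)
  have hloc : IsLocalMax (fun q => u q - φ q) (y, t) := by
    have hnh : Metric.ball x r ×ˢ Ioo a (b + 1) ∈ 𝓝 (y, t) :=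
      (Metric.isOpen_ball.prod isOpen_Ioo).mem_nhds ⟨hyr', hta', htb'⟩
    filter_upwards [hnh] with q hq
    have hqS : q ∈ S := ⟨Metric.ball_subset_closedBall hq.1, Ioo_subset_Icc_self hq.2⟩
    have h := hmax hqS
    have hq0 : 0 ≤ q.2 := ha.trans hq.2.1.le
    simp only [mem_ofPred_eq, hw, max_eq_left hq0, max_eq_left ht0.le] at h
    simp only [hφ]
    linarith
  have hfin := hsub φ hφ1 y t ht0 hloc
  have hder : fderiv ℝ φ (y, t) (0, 1) = k (x, t) + δ * (Real.exp (K * (t - b)) * K) := by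
    have hd := (hφ1.differentiable (by norm_num)) (y, t)
    have hline : HasDerivAt (fun s : ℝ => ((y, s) : En n × ℝ)) (0, 1) t :=
      (hasDerivAt_const t y).prodMk (hasDerivAt_id t)
    have h1 : HasDerivAt (fun s : ℝ => φ (y, s)) (fderiv ℝ φ (y, t) (0, 1)) t :=
      HasFDerivAt.comp_hasDerivAt t hd.hasFDerivAt hline
    have h2 : HasDerivAt (fun s : ℝ => φ (y, s))
        (k (x, t) + δ * (Real.exp (K * (t - b)) * K)) t :=
      ((hId t).add (hψd t)).add_const (N * ‖y - x‖ ^ 2)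
    exact h1.unique h2
  rw [hder] at hfin
  have h1 := hy3 t ⟨hta, htb⟩
  have h2 := hmle t hta
  have h3 := hF y (gradient (fun z => φ (z, t)) y)
  have h4 : k (y, t) = f y + uo (y, t) - u (y, t) := by simp [hk, max_eq_left ht0.le]
  simp only at hfin
  linarith

/-- Monotonicity Property 1 (Proposition 3.3): on A, t ↦ (u1 + u2)(x,t) is nonincreasing. -/
theorem stmt7 (n : ℕ) (hn : 1 ≤ n)
(F₁ F₂ : En n → En n → ℝ) (f₁ f₂ : En n → ℝ)
    (hF₁cont : Continuous fun q : En n × En n => F₁ q.1 q.2)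
    (hF₂cont : Continuous fun q : En n × En n => F₂ q.1 q.2)
    (hF₁per : ZPeriodicH F₁) (hF₂per : ZPeriodicH F₂)
    (hF₁coer : Coercive F₁) (hF₂coer : Coercive F₂)
    (hf₁cont : Continuous f₁) (hf₂cont : Continuous f₂)
    (hf₁per : ZPeriodic f₁) (hf₂per : ZPeriodic f₂)
    -- (A2)
    (hA2 : ∀ x : En n, 0 ≤ f₁ x ∧ 0 ≤ f₂ x)
    -- (A3)
    (hA3 : ∃ x : En n, f₁ x = 0 ∧ f₂ x = 0)
    -- (A4)
    (hA4 : ∃ lam₀ : ℝ, 0 < lam₀ ∧ lam₀ < 1 ∧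
      ∀ lam : ℝ, lam₀ ≤ lam → lam ≤ 1 → ∀ x : En n, ¬(f₁ x = 0 ∧ f₂ x = 0) →
        ∀ p : En n, F₁ x (lam • p) ≤ lam * F₁ x p ∧ F₂ x (lam • p) ≤ lam * F₂ x p)
    -- (A5)
    (hA5 : (∀ (x p : En n), 0 ≤ F₁ x p ∧ 0 ≤ F₂ x p) ∧ ∀ x : En n, F₁ x 0 = 0 ∧ F₂ x 0 = 0)
    (u₀₁ u₀₂ : En n → ℝ) (hu₀₁ : IsLip u₀₁) (hu₀₂ : IsLip u₀₂)
    (hu₀₁per : ZPeriodic u₀₁) (hu₀₂per : ZPeriodic u₀₂)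
    (u₁ u₂ : En n × ℝ → ℝ) (hu₁per : ZPeriodicST u₁) (hu₂per : ZPeriodicST u₂)
    (hsol : SysSolution (fun x p => F₁ x p - f₁ x) (fun x p => F₂ x p - f₂ x) u₀₁ u₀₂ u₁ u₂) :
    ∀ x : En n, f₁ x = 0 → f₂ x = 0 → ∀ s t : ℝ, 0 ≤ s → s ≤ t →
      u₁ (x, t) + u₂ (x, t) ≤ u₁ (x, s) + u₂ (x, s) := by
  intro x hx1 hx2 s t hs hst
  obtain ⟨hc1, hc2, ⟨hs1, hs2⟩, -, -, -⟩ := hsol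
  have k1 := key_ineq F₁ f₁ u₁ u₂ (fun x p => (hA5.1 x p).1) hf₁cont hc1 hc2 hs1 x s t hs hst
  have k2 := key_ineq F₂ f₂ u₂ u₁ (fun x p => (hA5.1 x p).2) hf₂cont hc2 hc1 hs2 x s t hs hst
  have h : ∀ r, f₂ x + u₁ (x, max r 0) - u₂ (x, max r 0)
      = -(f₁ x + u₂ (x, max r 0) - u₁ (x, max r 0)) := by
    intro r; rw [hx1, hx2]; ring
  simp only [h, intervalIntegral.integral_neg] at k2
  linarith
end

section
/- (Monotonicity Property 2.) Assume H_i(x,p) = F_i(x,p) − f_i(x) with F_i, f_i satisfying (A1)–(A5), and let (u₁, u₂) be the viscosity solution of (C) with Lipschitz continuous initial data (u₀₁, u₀₂). Set V(x,t) := max{u₁(x,t), u₂(x,t)}. Then for every x ∈ 𝒜, the function t ↦ V(x,t) is nonincreasing on [0,∞). -/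
open MeasureTheory Filter Topology Set

theorem key_ineq_s8 {n : ℕ} (F : En n → En n → ℝ) (f : En n → ℝ) (u uo : En n × ℝ → ℝ)
    (hF : ∀ x p, 0 ≤ F x p) (hsub : EvolSubIneq (fun x p => F x p - f x) u uo)
    (x y : En n) (s t τ η ε k K : ℝ) (hε : 0 ≤ ε) (hk : 0 ≤ k) (hτ : 0 < τ)
    (hle : uo (y, τ) ≤ u (y, τ))
    (hmax : IsLocalMax (fun q : En n × ℝ =>
      u q - (η * (q.2 - s) + ε * Real.exp (k * (q.2 - t)) + K * ‖q.1 - x‖ ^ 2)) (y, τ)) :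
    η ≤ f y := by
  have hC : ContDiff ℝ 1 (fun q : En n × ℝ =>
      (η * (q.2 - s) + ε * Real.exp (k * (q.2 - t)) + K * ‖q.1 - x‖ ^ 2)) := by
    have h1 : ContDiff ℝ 1 (fun q : En n × ℝ => ‖q.1 - x‖ ^ 2) :=
      (contDiff_fst.sub contDiff_const).norm_sq ℝ
    fun_prop
  have h := hsub _ hC y τ hτ hmax
  have hd : fderiv ℝ (fun q : En n × ℝ =>
      (η * (q.2 - s) + ε * Real.exp (k * (q.2 - t)) + K * ‖q.1 - x‖ ^ 2)) (y, τ) (0, 1)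
      = η + ε * (Real.exp (k * (τ - t)) * k) := by
    have h1 := (hC.differentiable (by norm_num) (y, τ)).hasFDerivAt
    have hl : HasDerivAt (fun r : ℝ => ((y, r) : En n × ℝ)) (0, 1) τ :=
      (hasDerivAt_const τ y).prodMk (hasDerivAt_id τ)
    have h2 := h1.comp_hasDerivAt τ hl
    have h3 : HasDerivAt (fun r : ℝ => η * (r - s) + ε * Real.exp (k * (r - t))
        + K * ‖y - x‖ ^ 2) (η * 1 + ε * (Real.exp (k * (τ - t)) * (k * 1))) τ := by
      have a1 := ((hasDerivAt_id τ).sub_const s).const_mul η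
      have a2 := ((((hasDerivAt_id τ).sub_const t).const_mul k).exp).const_mul ε
      exact (a1.add a2).add_const _
    have h4 := h2.unique h3
    simpa using h4
  rw [hd] at h
  have h5 := hF y (gradient (fun z => (η * (τ - s) + ε * Real.exp (k * (τ - t)) + K * ‖z - x‖ ^ 2)) y)
  have h6 : 0 ≤ ε * (Real.exp (k * (τ - t)) * k) := by positivity
  simp only at h
  linarith

/-- Monotonicity Property 2 (Proposition 3.4): on A, t ↦ max(u1, u2)(x,t) is nonincreasing. -/
theorem stmt8 (n : ℕ) (hn : 1 ≤ n)
(F₁ F₂ : En n → En n → ℝ) (f₁ f₂ : En n → ℝ)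
    (hF₁cont : Continuous fun q : En n × En n => F₁ q.1 q.2)
    (hF₂cont : Continuous fun q : En n × En n => F₂ q.1 q.2)
    (hF₁per : ZPeriodicH F₁) (hF₂per : ZPeriodicH F₂)
    (hF₁coer : Coercive F₁) (hF₂coer : Coercive F₂)
    (hf₁cont : Continuous f₁) (hf₂cont : Continuous f₂)
    (hf₁per : ZPeriodic f₁) (hf₂per : ZPeriodic f₂)
    -- (A2)
    (hA2 : ∀ x : En n, 0 ≤ f₁ x ∧ 0 ≤ f₂ x)
    -- (A3)
    (hA3 : ∃ x : En n, f₁ x = 0 ∧ f₂ x = 0)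
    -- (A4)
    (hA4 : ∃ lam₀ : ℝ, 0 < lam₀ ∧ lam₀ < 1 ∧
      ∀ lam : ℝ, lam₀ ≤ lam → lam ≤ 1 → ∀ x : En n, ¬(f₁ x = 0 ∧ f₂ x = 0) →
        ∀ p : En n, F₁ x (lam • p) ≤ lam * F₁ x p ∧ F₂ x (lam • p) ≤ lam * F₂ x p)
    -- (A5)
    (hA5 : (∀ (x p : En n), 0 ≤ F₁ x p ∧ 0 ≤ F₂ x p) ∧ ∀ x : En n, F₁ x 0 = 0 ∧ F₂ x 0 = 0)
    (u₀₁ u₀₂ : En n → ℝ) (hu₀₁ : IsLip u₀₁) (hu₀₂ : IsLip u₀₂)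
    (hu₀₁per : ZPeriodic u₀₁) (hu₀₂per : ZPeriodic u₀₂)
    (u₁ u₂ : En n × ℝ → ℝ) (hu₁per : ZPeriodicST u₁) (hu₂per : ZPeriodicST u₂)
    (hsol : SysSolution (fun x p => F₁ x p - f₁ x) (fun x p => F₂ x p - f₂ x) u₀₁ u₀₂ u₁ u₂) :
    ∀ x : En n, f₁ x = 0 → f₂ x = 0 → ∀ s t : ℝ, 0 ≤ s → s ≤ t →
      max (u₁ (x, t)) (u₂ (x, t)) ≤ max (u₁ (x, s)) (u₂ (x, s)) := by
  intro x hx1 hx2 s t hs hst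
  obtain ⟨hc1, hc2, ⟨hs1, hs2⟩, -, -, -⟩ := hsol
  by_contra hcon
  push Not at hcon
  have hst' : s < t := by
    rcases hst.lt_or_eq with h | h
    · exact h
    · subst h; exact absurd hcon (lt_irrefl _)
  set V : En n × ℝ → ℝ := fun q => max (u₁ q) (u₂ q) with hV
  have hVc : ContinuousOn V {q : En n × ℝ | 0 ≤ q.2} := ContinuousOn.sup hc1 hc2
  change V (x, s) < V (x, t) at hcon
  obtain ⟨a, ha⟩ : ∃ a, a = V (x, t) - V (x, s) := ⟨_, rfl⟩
  have hapos : 0 < a := by linarith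
  obtain ⟨η, hη⟩ : ∃ η, η = a / 2 / (t - s) := ⟨_, rfl⟩
  have hts : 0 < t - s := by linarith
  have hηpos : 0 < η := by rw [hη]; positivity
  have hηts : η * (t - s) = a / 2 := by rw [hη]; field_simp
  obtain ⟨k, hk⟩ : ∃ k, k = |(V (x, t + 1) + 1 - V (x, t) + a) / (a / 4)| := ⟨_, rfl⟩
  have hk0 : 0 ≤ k := by rw [hk]; positivity
  have hkk : V (x, t + 1) + 1 - V (x, t) + a ≤ a / 4 * k := by
    have h1 : (V (x, t + 1) + 1 - V (x, t) + a) / (a / 4) ≤ k := hk ▸ le_abs_self _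
    rw [div_le_iff₀ (by positivity)] at h1
    linarith
  have slice : ∀ r : ℝ, 0 ≤ r → Continuous fun y : En n => V (y, r) := by
    intro r hr
    exact hVc.comp_continuous (by fun_prop) (fun y => hr)
  have e1 : ∀ᶠ y in 𝓝 x, V (y, s) < V (x, s) + a / 4 :=
    (slice s hs).continuousAt.eventually_lt continuousAt_const (by linarith)
  have e2 : ∀ᶠ y in 𝓝 x, V (y, t + 1) < V (x, t + 1) + 1 :=
    (slice (t + 1) (by linarith)).continuousAt.eventually_lt continuousAt_const (by linarith)
  have e3 : ∀ᶠ y in 𝓝 x, f₁ y < η :=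
    hf₁cont.continuousAt.eventually_lt continuousAt_const (by linarith)
  have e4 : ∀ᶠ y in 𝓝 x, f₂ y < η :=
    hf₂cont.continuousAt.eventually_lt continuousAt_const (by linarith)
  obtain ⟨δ, hδ, hball⟩ := Metric.nhds_basis_closedBall.eventually_iff.1
    (e1.and (e2.and (e3.and e4)))
  have hcomp : IsCompact (Metric.closedBall x δ ×ˢ Icc s (t + 1)) :=
    (isCompact_closedBall x δ).prod isCompact_Icc
  have hVc' : ContinuousOn V (Metric.closedBall x δ ×ˢ Icc s (t + 1)) :=
    hVc.mono (fun q hq => hs.trans hq.2.1)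
  obtain ⟨M, hM⟩ := hcomp.bddAbove_image hVc'
  have hM' : ∀ q ∈ Metric.closedBall x δ ×ˢ Icc s (t + 1), V q ≤ M :=
    fun q hq => hM (mem_image_of_mem _ hq)
  obtain ⟨K, hK⟩ : ∃ K, K = |(M - V (x, t) + a) / δ ^ 2| := ⟨_, rfl⟩
  have hK0 : 0 ≤ K := by rw [hK]; positivity
  have hKK : M - V (x, t) + a ≤ K * δ ^ 2 := by
    have h1 : (M - V (x, t) + a) / δ ^ 2 ≤ K := hK ▸ le_abs_self _
    rwa [div_le_iff₀ (by positivity)] at h1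
  have hcont : ContinuousOn (fun q : En n × ℝ =>
      V q - (η * (q.2 - s) + a / 4 * Real.exp (k * (q.2 - t)) + K * ‖q.1 - x‖ ^ 2))
      (Metric.closedBall x δ ×ˢ Icc s (t + 1)) :=
    hVc'.sub (Continuous.continuousOn (by fun_prop))
  have hmem : (x, t) ∈ Metric.closedBall x δ ×ˢ Icc s (t + 1) :=
    ⟨Metric.mem_closedBall_self hδ.le, hst, by simp⟩
  obtain ⟨⟨y, τ⟩, hyτ, hmx⟩ := hcomp.exists_isMaxOn ⟨_, hmem⟩ hcont
  have hx := hmx hmem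
  simp only [mem_ofPred_eq, sub_self, norm_zero, mul_zero, Real.exp_zero, hηts] at hx
  obtain ⟨hy, hτ1, hτ2⟩ := hyτ
  simp only at hy hτ1 hτ2
  obtain ⟨b1, b2, b3, b4⟩ := hball hy
  have p1 : 0 ≤ a / 4 * Real.exp (k * (τ - t)) := by positivity
  have p2 : 0 ≤ η * (τ - s) := mul_nonneg hηpos.le (by linarith)
  have p3 : 0 ≤ K * ‖y - x‖ ^ 2 := by positivity
  have c1 : s < τ := by
    rcases hτ1.lt_or_eq with h | h
    · exact h
    · exfalso
      subst h
      nlinarith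
  have c2 : τ < t + 1 := by
    rcases hτ2.lt_or_eq with h | h
    · exact h
    · exfalso
      subst h
      have h1 := Real.add_one_le_exp (k * (t + 1 - t))
      have h2 : a / 4 * (k * (t + 1 - t) + 1) ≤ a / 4 * Real.exp (k * (t + 1 - t)) :=
        mul_le_mul_of_nonneg_left h1 (by positivity)
      have h3 : a / 4 * (k * (t + 1 - t) + 1) = a / 4 * k + a / 4 := by ring
      linarith
  have c3 : dist y x < δ := by
    rcases (Metric.mem_closedBall.1 hy).lt_or_eq with h | h
    · exact h
    · exfalso
      rw [dist_eq_norm] at h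
      rw [h] at hx
      have := hM' (y, τ) ⟨hy, hτ1, hτ2⟩
      linarith
  have hnb : Metric.closedBall x δ ×ˢ Icc s (t + 1) ∈ 𝓝 (y, τ) := by
    refine prod_mem_nhds ?_ (Icc_mem_nhds c1 c2)
    exact mem_of_superset (Metric.isOpen_ball.mem_nhds c3) Metric.ball_subset_closedBall
  have hloc := hmx.isLocalMax hnb
  rcases le_total (u₂ (y, τ)) (u₁ (y, τ)) with hle | hle
  · have := key_ineq_s8 F₁ f₁ u₁ u₂ (fun x p => (hA5.1 x p).1) hs1 x y s t τ η (a / 4) k K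
      (by positivity) hk0 (by linarith) hle (by
        filter_upwards [hloc] with q hq
        have q1 : u₁ q ≤ V q := le_max_left _ _
        have q2 : V (y, τ) = u₁ (y, τ) := max_eq_left hle
        rw [q2] at hq
        linarith)
    linarith
  · have := key_ineq_s8 F₂ f₂ u₂ u₁ (fun x p => (hA5.1 x p).2) hs2 x y s t τ η (a / 4) k K
      (by positivity) hk0 (by linarith) hle (by
        filter_upwards [hloc] with q hq
        have q1 : u₂ q ≤ V q := le_max_right _ _
        have q2 : V (y, τ) = u₂ (y, τ) := max_eq_right hle
        rw [q2] at hq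
        linarith)
    linarith
end

section
/- (Convergence Result 2.) Assume the Hamiltonians are independent of x, H_i(x,p) = H_i(p) for i = 1,2, with each H_i continuous, coercive, uniformly convex ((A6)) and satisfying H_i(0) = 0 ((A7)). Let (u₁, u₂) be the viscosity solution of (C) with Lipschitz continuous initial data (u₀₁, u₀₂). Then there exists a constant M ∈ ℝ such that u_i(·,t) − M → 0 uniformly on 𝕋^n as t → ∞, for i = 1,2. -/
open MeasureTheory Filter Topology Set

/-- one-step propagation along a characteristic -/
lemma aux_propag {n : ℕ} {H : En n → ℝ} {u uo : En n × ℝ → ℝ}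
    (hsub : EvolSubIneq (fun _ p => H p) u uo)
    (hc : ContinuousOn u {q : En n × ℝ | 0 ≤ q.2}) (b : En n) (C : ℝ)
    (hH : ∀ p v : En n, inner ℝ (b + v) p - C * ‖v‖ ^ 2 ≤ H p)
    (t h ρ κ : ℝ) (ht : 0 ≤ t) (hh : 0 < h) (hρ : 0 < ρ) (x v : En n)
    (hκ : ∀ s y, t ≤ s → s ≤ t + 2 * h → ‖y - x - (s - t) • (b + v)‖ ≤ ρ →
      uo (y, s) - u (y, s) ≤ κ) :
    u (x + h • (b + v), t + h) ≤ u (x, t) + h * (κ + C * ‖v‖ ^ 2) := by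
  by_contra hcon
  push Not at hcon
  set c : En n := b + v with hcdef
  -- choose lam' and σ
  obtain ⟨σ, hσ, lam, hlam, hgap⟩ : ∃ σ > 0, ∃ lam > κ + C * ‖v‖ ^ 2,
      u (x, t) + h * lam + 3 * σ = u (x + h • c, t + h) := by
    set g := u (x + h • c, t + h) - (u (x, t) + h * (κ + C * ‖v‖ ^ 2)) with hg
    have hgpos : 0 < g := by rw [hg]; linarith
    refine ⟨g / 6, by positivity, κ + C * ‖v‖ ^ 2 + g / (2 * h), ?_, ?_⟩
    · have : 0 < g / (2 * h) := by positivity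
      linarith
    · have : h * (g / (2 * h)) = g / 2 := by field_simp
      rw [mul_add, this]; linarith
  set K : Set (En n × ℝ) := {q | t ≤ q.2 ∧ q.2 ≤ t + 2 * h ∧ ‖q.1 - x - (q.2 - t) • c‖ ≤ ρ} with hK
  have hKc : IsCompact K := by
    have h1 : IsCompact ((fun q : En n × ℝ => (q.1 + x + (q.2 - t) • c, q.2)) ''
        (Metric.closedBall (0 : En n) ρ ×ˢ Set.Icc t (t + 2 * h))) := by
      apply IsCompact.image
      · exact (isCompact_closedBall _ _).prod isCompact_Icc
      · fun_prop
    convert h1 using 1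
    ext ⟨y, s⟩
    simp only [hK, Set.mem_ofPred_eq, Set.mem_image, Set.mem_prod, Metric.mem_closedBall,
      dist_zero_right, Set.mem_Icc, Prod.exists, Prod.mk.injEq]
    constructor
    · rintro ⟨h1, h2, h3⟩
      exact ⟨y - x - (s - t) • c, s, ⟨h3, h1, h2⟩, by abel, rfl⟩
    · rintro ⟨a, s', ⟨h3, h1, h2⟩, h4, rfl⟩
      refine ⟨h1, h2, ?_⟩
      rw [← h4]
      have : a + x + (s' - t) • c - x - (s' - t) • c = a := by abel
      rwa [this]
  have hKsub : K ⊆ {q : En n × ℝ | 0 ≤ q.2} := by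
    rintro ⟨y, s⟩ ⟨h1, -, -⟩
    exact le_trans ht h1
  obtain ⟨B, hB⟩ := hKc.exists_bound_of_continuousOn (hc.mono hKsub)
  have hxtK : (x, t) ∈ K := by
    refine ⟨le_rfl, by simp; linarith, ?_⟩
    simp [hρ.le]
  have hB0 : 0 ≤ B := le_trans (norm_nonneg _) (hB _ hxtK)
  -- continuity at (x,t)
  obtain ⟨r, hr, hrcont⟩ : ∃ r > 0, ∀ y, ‖y - x‖ < r → u (y, t) ≤ u (x, t) + σ := by
    have h1 : ContinuousWithinAt u {q : En n × ℝ | 0 ≤ q.2} (x, t) := hc _ ht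
    rw [Metric.continuousWithinAt_iff] at h1
    obtain ⟨r, hr, h2⟩ := h1 σ hσ
    refine ⟨r, hr, fun y hy => ?_⟩
    have h3 := h2 (x := (y, t)) ht (by
      rw [Prod.dist_eq, dist_self, dist_eq_norm]; exact max_lt hy hr)
    rw [Real.dist_eq] at h3
    linarith [(abs_lt.1 h3).2]
  set L : ℝ := 2 * B + |lam| * (2 * h) + 1 with hL
  have hLpos : 0 < L := by positivity
  obtain ⟨δ, hδ, hδr, hδρ⟩ : ∃ δ > 0, L ≤ δ * r ^ 2 ∧ L ≤ δ * ρ ^ 2 := by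
    refine ⟨L / r ^ 2 + L / ρ ^ 2, by positivity, ?_, ?_⟩
    · have : L / r ^ 2 * r ^ 2 = L := by field_simp
      have : 0 ≤ L / ρ ^ 2 * r ^ 2 := by positivity
      linarith
    · have : L / ρ ^ 2 * ρ ^ 2 = L := by field_simp
      have : 0 ≤ L / r ^ 2 * ρ ^ 2 := by positivity
      linarith
  obtain ⟨N, hN⟩ : ∃ N : ℕ, L < σ * 2 ^ N := by
    obtain ⟨N, hN⟩ := pow_unbounded_of_one_lt (L / σ) (one_lt_two)
    refine ⟨N, ?_⟩
    rw [div_lt_iff₀ hσ] at hN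
    linarith
  set φ : En n × ℝ → ℝ := fun q => lam * (q.2 - t) + σ * ((q.2 - t) / h) ^ N
    + δ * ‖q.1 - x - (q.2 - t) • c‖ ^ 2 with hφ
  have hφC : ContDiff ℝ 1 φ := by
    rw [hφ]
    apply ContDiff.add
    · fun_prop
    · apply ContDiff.mul contDiff_const
      apply ContDiff.norm_sq ℝ
      fun_prop
  obtain ⟨⟨y, s⟩, hyK, hmax⟩ := hKc.exists_isMaxOn ⟨_, hxtK⟩
    ((hc.mono hKsub).sub hφC.continuous.continuousOn)
  obtain ⟨hs1, hs2, hyρ⟩ := hyK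
  simp only at hs1 hs2 hyρ
  have hmem : (x + h • c, t + h) ∈ K := by
    refine ⟨by simp; linarith, by simp; linarith, ?_⟩
    simp [hρ.le]
  have hval := hmax hmem
  simp only [Set.mem_ofPred_eq, Pi.sub_apply, hφ] at hval
  have e1 : x + h • c - x - (t + h - t) • c = 0 := by
    rw [add_sub_cancel_left, add_sub_cancel_left, sub_self]
  rw [e1, add_sub_cancel_left, div_self hh.ne', one_pow, norm_zero] at hval
  have huB : u (y, s) ≤ B := le_trans (le_abs_self _) (hB _ ⟨hs1, hs2, hyρ⟩)
  have hxB : -B ≤ u (x, t) := by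
    have := hB _ hxtK
    rw [Real.norm_eq_abs] at this
    exact (abs_le.1 this).1
  have hlamB : -(|lam| * (2 * h)) ≤ lam * (s - t) := by
    have h1 : |lam * (s - t)| ≤ |lam| * (2 * h) := by
      rw [abs_mul, abs_of_nonneg (sub_nonneg.2 hs1)]
      exact mul_le_mul_of_nonneg_left (by linarith) (abs_nonneg _)
    exact (abs_le.1 h1).1
  have hpow : 0 ≤ σ * ((s - t) / h) ^ N := by
    have : 0 ≤ (s - t) / h := div_nonneg (by linarith) hh.le
    positivity
  have hsq : 0 ≤ δ * ‖y - x - (s - t) • c‖ ^ 2 := by positivity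
  have hslt : s < t + 2 * h := by
    rcases lt_or_eq_of_le hs2 with h1 | h1
    · exact h1
    · exfalso
      have : (s - t) / h = 2 := by rw [h1]; field_simp; ring
      rw [this] at hval
      linarith
  have hyρ' : ‖y - x - (s - t) • c‖ < ρ := by
    rcases lt_or_eq_of_le hyρ with h1 | h1
    · exact h1
    · exfalso
      rw [h1] at hval
      linarith
  have hsgt : t < s := by
    rcases lt_or_eq_of_le hs1 with h1 | h1
    · exact h1
    · exfalso
      subst h1
      simp only [sub_self, zero_smul, sub_zero, mul_zero] at hval hlamB
      have hp : 0 ≤ σ * (0 / h) ^ N := by positivity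
      by_cases hy : ‖y - x‖ < r
      · have := hrcont y hy
        have : 0 ≤ δ * ‖y - x‖ ^ 2 := by positivity
        linarith
      · push Not at hy
        have : r ^ 2 ≤ ‖y - x‖ ^ 2 := by gcongr
        have := mul_le_mul_of_nonneg_left this hδ.le
        have : 0 ≤ |lam| * (2 * h) := by positivity
        linarith
  have hloc : IsLocalMax (fun q => u q - φ q) (y, s) := by
    have hopen : K ∈ 𝓝 (y, s) := by
      have h1 : ∀ᶠ q : En n × ℝ in 𝓝 (y, s), t < q.2 :=
        (continuous_snd.tendsto (y, s)).eventually_const_lt hsgt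
      have h2 : ∀ᶠ q : En n × ℝ in 𝓝 (y, s), q.2 < t + 2 * h :=
        (continuous_snd.tendsto (y, s)).eventually_lt_const hslt
      have h3 : ∀ᶠ q : En n × ℝ in 𝓝 (y, s), ‖q.1 - x - (q.2 - t) • c‖ < ρ := by
        have : Continuous (fun q : En n × ℝ => ‖q.1 - x - (q.2 - t) • c‖) := by fun_prop
        exact (this.tendsto (y, s)).eventually_lt_const hyρ'
      filter_upwards [h1, h2, h3] with q a1 a2 a3
      exact ⟨a1.le, a2.le, a3.le⟩
    exact hmax.isLocalMax hopen
  have hv := hsub φ hφC y s (by linarith) hloc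
  set e : En n := y - x - (s - t) • c with he
  have hgrad : gradient (fun y' => φ (y', s)) y = (2 * δ) • e := by
    apply HasGradientAt.gradient
    rw [hasGradientAt_iff_hasFDerivAt]
    have h1 : HasFDerivAt (fun y' : En n => y' - x - (s - t) • c) (ContinuousLinearMap.id ℝ (En n)) y :=
      ((hasFDerivAt_id y).sub_const x).sub_const _
    have h2 := (h1.norm_sq.const_mul δ).const_add (lam * (s - t) + σ * ((s - t) / h) ^ N)
    refine h2.congr_fderiv ?_
    ext z
    simp [← he]
    ring
  have htime : fderiv ℝ φ (y, s) (0, 1) = lam + σ * (N * ((s - t) / h) ^ (N - 1) * (1 / h))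
      + δ * (2 * inner ℝ e (-c)) := by
    have h1 : HasDerivAt (fun s' : ℝ => (y, s')) ((0 : En n), (1 : ℝ)) s :=
      (hasDerivAt_const s y).prodMk (hasDerivAt_id s)
    have h2 := ((hφC.differentiable one_ne_zero) (y, s)).hasFDerivAt.comp_hasDerivAt s h1
    have h3 : HasDerivAt (fun s' : ℝ => s' - t) 1 s := (hasDerivAt_id s).sub_const t
    have h4 : HasDerivAt (fun s' : ℝ => y - x - (s' - t) • c) (-c) s := by
      have := (h3.smul_const c).const_sub (y - x)
      simpa using this
    have h5 := ((h3.const_mul lam).add (((h3.div_const h).pow N).const_mul σ)).add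
      (h4.norm_sq.const_mul δ)
    have h6 := h2.unique h5
    rw [h6]
    simp [← he]
  simp only [hgrad, htime] at hv
  have hHv := hH ((2 * δ) • e) v
  rw [← hcdef, inner_smul_right] at hHv
  have hκ' := hκ s y hs1 hs2 hyρ
  have hpow' : 0 ≤ σ * (N * ((s - t) / h) ^ (N - 1) * (1 / h)) := by
    have : 0 ≤ (s - t) / h := div_nonneg (by linarith) hh.le
    positivity
  rw [inner_neg_right, real_inner_comm] at hv
  linarith

lemma aux_convex {n : ℕ} {H : En n → ℝ} (hHc : Continuous H) (hA : UnifConvex H) (h0 : H 0 = 0) :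
    ∃ (b : En n) (C : ℝ), 0 ≤ C ∧ ∀ p v : En n, inner ℝ (b + v) p - C * ‖v‖ ^ 2 ≤ H p := by
  obtain ⟨α, hα, hae⟩ := hA
  have hdense := Measure.dense_of_ae hae
  have hex : ∀ k : ℕ, ∃ q : En n, ‖q‖ < 1 / ((k : ℝ) + 1) ∧ ∀ p : En n,
      H q + fderiv ℝ H q (p - q) + α * ‖p - q‖ ^ 2 ≤ H p := by
    intro k
    obtain ⟨q, hq1, hq2⟩ := hdense.exists_dist_lt (0 : En n) (ε := 1 / ((k : ℝ) + 1)) (by positivity)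
    refine ⟨q, ?_, hq1.2⟩
    simpa using hq2
  choose q hq hqH using hex
  have hq0 : Tendsto q atTop (𝓝 0) := by
    rw [tendsto_zero_iff_norm_tendsto_zero]
    exact squeeze_zero (fun _ => norm_nonneg _) (fun k => (hq k).le) tendsto_one_div_add_atTop_nhds_zero_nat
  obtain ⟨B, hB⟩ := (isCompact_closedBall (0 : En n) 2).exists_bound_of_continuousOn hHc.continuousOn
  have hq1 : ∀ k, ‖q k‖ ≤ 1 := by
    intro k
    refine (hq k).le.trans ?_
    rw [div_le_one (by positivity)]
    have : (0 : ℝ) ≤ k := Nat.cast_nonneg k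
    linarith
  have hub : ∀ k (p : En n), ‖p‖ ≤ 1 → fderiv ℝ H (q k) p ≤ 2 * B := by
    intro k p hp
    have h1 := hqH k (q k + p)
    rw [add_sub_cancel_left] at h1
    have h2 := hB (q k + p) (by
      rw [mem_closedBall_zero_iff]
      have := norm_add_le (q k) p
      linarith [hq1 k])
    have h3 := hB (q k) (by
      rw [mem_closedBall_zero_iff]
      linarith [hq1 k])
    rw [Real.norm_eq_abs] at h2 h3
    have : 0 ≤ α * ‖p‖ ^ 2 := by positivity
    linarith [(abs_le.1 h2).2, (abs_le.1 h3).1]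
  have hB0 : 0 ≤ B := le_trans (norm_nonneg _) (hB 0 (by simp))
  have hbd : ∀ k, fderiv ℝ H (q k) ∈ Metric.closedBall (0 : En n →L[ℝ] ℝ) (2 * B) := by
    intro k
    rw [mem_closedBall_zero_iff]
    refine ContinuousLinearMap.opNorm_le_of_unit_norm (by positivity) ?_
    intro p hp
    rw [Real.norm_eq_abs, abs_le]
    constructor
    · have := hub k (-p) (by rw [norm_neg, hp])
      rw [map_neg] at this
      linarith
    · exact hub k p hp.le
  obtain ⟨f, -, ψ, hψ, hf⟩ := (isCompact_closedBall (0 : En n →L[ℝ] ℝ) (2 * B)).tendsto_subseq hbd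
  have hfin : ∀ p, f p + α * ‖p‖ ^ 2 ≤ H p := by
    intro p
    have hqψ : Tendsto (fun k => q (ψ k)) atTop (𝓝 0) := hq0.comp hψ.tendsto_atTop
    have hpq : Tendsto (fun k => p - q (ψ k)) atTop (𝓝 p) := by
      simpa using (tendsto_const_nhds (x := p)).sub hqψ
    have h1 : Tendsto (fun k => H (q (ψ k)) + fderiv ℝ H (q (ψ k)) (p - q (ψ k))
        + α * ‖p - q (ψ k)‖ ^ 2) atTop (𝓝 (H 0 + f p + α * ‖p‖ ^ 2)) := by
      refine Tendsto.add (Tendsto.add ?_ ?_) ?_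
      · exact (hHc.tendsto 0).comp hqψ
      · exact (isBoundedBilinearMap_apply.continuous.tendsto (f, p)).comp (hf.prodMk_nhds hpq)
      · exact (hpq.norm.pow 2).const_mul α
    have := le_of_tendsto' h1 (fun k => hqH (ψ k) p)
    rw [h0] at this
    linarith
  refine ⟨(InnerProductSpace.toDual ℝ (En n)).symm f, 1 / (4 * α), by positivity, ?_⟩
  intro p v
  have h1 := hfin p
  rw [inner_add_left, InnerProductSpace.toDual_symm_apply]
  have h2 := real_inner_le_norm v p
  have h3 : ‖v‖ * ‖p‖ ≤ α * ‖p‖ ^ 2 + 1 / (4 * α) * ‖v‖ ^ 2 := by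
    have : α * ‖p‖ ^ 2 + 1 / (4 * α) * ‖v‖ ^ 2 - ‖v‖ * ‖p‖
        = 1 / (4 * α) * (2 * α * ‖p‖ - ‖v‖) ^ 2 := by
      field_simp
      ring
    have h4 : 0 ≤ 1 / (4 * α) * (2 * α * ‖p‖ - ‖v‖) ^ 2 := by positivity
    linarith
  linarith

lemma aux_cube (n : ℕ) (x : En n) : ∃ k : Fin n → ℤ, ‖x + intVec n k‖ ≤ n := by
  refine ⟨fun i => -⌊x i⌋, ?_⟩
  rw [EuclideanSpace.norm_eq]
  rw [Real.sqrt_le_left (by positivity)]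
  have h1 : ∀ i ∈ (Finset.univ : Finset (Fin n)),
      ‖(x + intVec n (fun i => -⌊x i⌋)) i‖ ^ 2 ≤ 1 := by
    intro i _
    have : (x + intVec n (fun i => -⌊x i⌋)) i = Int.fract (x i) := by
      simp [intVec, Int.fract, sub_eq_add_neg]
    rw [this, Real.norm_eq_abs, sq_abs]
    have h1 := Int.fract_nonneg (x i)
    have h2 := (Int.fract_lt_one (x i)).le
    nlinarith
  have h2 := Finset.sum_le_sum h1
  simp only [Finset.sum_const, Finset.card_univ, Fintype.card_fin, nsmul_eq_mul, mul_one] at h2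
  refine h2.trans ?_
  rcases Nat.eq_zero_or_pos n with h | h
  · subst h; simp
  · have : (1 : ℝ) ≤ n := by exact_mod_cast h
    nlinarith

lemma aux_uc {n : ℕ} {u : En n × ℝ → ℝ} (hper : ZPeriodicST u)
    (hc : ContinuousOn u {q : En n × ℝ | 0 ≤ q.2}) (T ε : ℝ) (hε : 0 < ε) :
    ∃ ρ > 0, ∀ x y s t, 0 ≤ s → s ≤ T → 0 ≤ t → t ≤ T → ‖y - x‖ ≤ ρ → |s - t| ≤ ρ →
      |u (y, s) - u (x, t)| ≤ ε := by
  have hK : IsCompact (Metric.closedBall (0 : En n) (n + 1) ×ˢ Set.Icc (0 : ℝ) T) :=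
    (isCompact_closedBall _ _).prod isCompact_Icc
  have huc := hK.uniformContinuousOn_of_continuous (hc.mono (by
    rintro ⟨y, s⟩ ⟨-, h1⟩
    exact h1.1))
  rw [Metric.uniformContinuousOn_iff] at huc
  obtain ⟨ρ, hρ, h⟩ := huc ε hε
  refine ⟨min (ρ / 2) 1, by positivity, ?_⟩
  intro x y s t hs0 hsT ht0 htT hxy hst
  obtain ⟨k, hk⟩ := aux_cube n x
  have hxy1 : ‖y - x‖ ≤ 1 := hxy.trans (min_le_right _ _)
  have hxy2 : ‖y - x‖ ≤ ρ / 2 := hxy.trans (min_le_left _ _)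
  have hst2 : |s - t| ≤ ρ / 2 := hst.trans (min_le_left _ _)
  have := h (y + intVec n k, s) ⟨by
      rw [mem_closedBall_zero_iff]
      have e : y + intVec n k = (y - x) + (x + intVec n k) := by abel
      simp only [e]
      refine (norm_add_le _ _).trans ?_
      linarith, hs0, hsT⟩ (x + intVec n k, t) ⟨by
      rw [mem_closedBall_zero_iff]
      simp only
      linarith, ht0, htT⟩ (by
      rw [Prod.dist_eq]
      simp only
      rw [dist_add_right, dist_eq_norm, Real.dist_eq]
      exact max_lt (by linarith) (by linarith))
  rw [hper, hper, Real.dist_eq] at this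
  exact this.le

lemma aux_bdd {n : ℕ} {u : En n × ℝ → ℝ} (hper : ZPeriodicST u)
    (hc : ContinuousOn u {q : En n × ℝ | 0 ≤ q.2}) (T : ℝ) :
    ∃ B, 0 ≤ B ∧ ∀ x t, 0 ≤ t → t ≤ T → |u (x, t)| ≤ B := by
  have hK : IsCompact (Metric.closedBall (0 : En n) n ×ˢ Set.Icc (0 : ℝ) T) :=
    (isCompact_closedBall _ _).prod isCompact_Icc
  obtain ⟨B, hB⟩ := hK.exists_bound_of_continuousOn (hc.mono (by
    rintro ⟨y, s⟩ ⟨-, h1⟩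
    exact h1.1))
  refine ⟨max B 0, le_max_right _ _, fun x t h0 h1 => ?_⟩
  obtain ⟨k, hk⟩ := aux_cube n x
  have := hB (x + intVec n k, t) ⟨by rw [mem_closedBall_zero_iff]; exact hk, h0, h1⟩
  rw [hper] at this
  exact this.trans (le_max_left _ _)

lemma aux_lower {n : ℕ} {H₁ H₂ : En n → ℝ} {u₁ u₂ : En n × ℝ → ℝ}
    (h01 : H₁ 0 = 0) (h02 : H₂ 0 = 0)
    (hs1 : EvolSuperIneq (fun _ p => H₁ p) u₁ u₂) (hs2 : EvolSuperIneq (fun _ p => H₂ p) u₂ u₁)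
    (hper1 : ZPeriodicST u₁) (hper2 : ZPeriodicST u₂)
    (hc1 : ContinuousOn u₁ {q : En n × ℝ | 0 ≤ q.2})
    (hc2 : ContinuousOn u₂ {q : En n × ℝ | 0 ≤ q.2}) (m : ℝ)
    (hm1 : ∀ x, m ≤ u₁ (x, 0)) (hm2 : ∀ x, m ≤ u₂ (x, 0)) (T : ℝ) (hT : 0 < T) (x : En n) :
    m ≤ min (u₁ (x, T)) (u₂ (x, T)) := by
  by_contra hcon
  push Not at hcon
  obtain ⟨σ, hσ, hgap⟩ : ∃ σ > 0, min (u₁ (x, T)) (u₂ (x, T)) = m - 2 * σ :=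
    ⟨(m - min (u₁ (x, T)) (u₂ (x, T))) / 2, by linarith, by ring⟩
  obtain ⟨B1, hB10, hB1⟩ := aux_bdd hper1 hc1 (2 * T)
  obtain ⟨B2, hB20, hB2⟩ := aux_bdd hper2 hc2 (2 * T)
  obtain ⟨N, hN⟩ : ∃ N : ℕ, B1 + B2 + |m| < σ * 2 ^ (N + 1) := by
    obtain ⟨N, hN⟩ := pow_unbounded_of_one_lt ((B1 + B2 + |m|) / σ) (one_lt_two)
    refine ⟨N, ?_⟩
    rw [div_lt_iff₀ hσ] at hN
    have : (0 : ℝ) < 2 ^ N := by positivity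
    rw [pow_succ]
    nlinarith
  set g : ℝ → ℝ := fun s => σ * (s / T) ^ (N + 1) with hg
  set w : En n × ℝ → ℝ := fun q => min (u₁ q) (u₂ q) + g q.2 with hw
  have hgc : Continuous (fun q : En n × ℝ => g q.2) := by
    rw [hg]; fun_prop
  have hK : IsCompact (Metric.closedBall (0 : En n) n ×ˢ Set.Icc (0 : ℝ) (2 * T)) :=
    (isCompact_closedBall _ _).prod isCompact_Icc
  have hKsub : (Metric.closedBall (0 : En n) n ×ˢ Set.Icc (0 : ℝ) (2 * T)) ⊆
      {q : En n × ℝ | 0 ≤ q.2} := by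
    rintro ⟨y, s⟩ ⟨-, h1⟩
    exact h1.1
  have hwc : ContinuousOn w {q : En n × ℝ | 0 ≤ q.2} :=
    ContinuousOn.add (fun q hq => (hc1 q hq).min (hc2 q hq)) hgc.continuousOn
  obtain ⟨⟨y, s⟩, ⟨hy, hs0, hsT⟩, hmin⟩ := hK.exists_isMinOn
    ⟨(0, 0), by simp [hT.le]⟩ (hwc.mono hKsub)
  simp only at hs0 hsT
  have hglob : ∀ z r, 0 ≤ r → r ≤ 2 * T → w (y, s) ≤ w (z, r) := by
    intro z r h0 h1
    obtain ⟨k, hk⟩ := aux_cube n z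
    have := hmin (a := (z + intVec n k, r)) ⟨by rw [mem_closedBall_zero_iff]; exact hk, h0, h1⟩
    simp only [Set.mem_ofPred_eq, hw] at this
    rw [hper1, hper2] at this
    exact this
  have hval : w (y, s) ≤ m - σ := by
    have := hglob x T hT.le (by linarith)
    simp only [hw, hg] at this ⊢
    rw [hgap, div_self hT.ne', one_pow] at this
    linarith
  have hspos : 0 < s := by
    rcases lt_or_eq_of_le hs0 with h | h
    · exact h
    · exfalso
      subst h
      simp only [hw, hg] at hval
      rw [zero_div, zero_pow (by simp)] at hval
      have := le_min (hm1 y) (hm2 y)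
      linarith
  have hslt : s < 2 * T := by
    rcases lt_or_eq_of_le hsT with h | h
    · exact h
    · exfalso
      have h1 := (abs_le.1 (hB1 y s hs0 hsT)).1
      have h2 := (abs_le.1 (hB2 y s hs0 hsT)).1
      have h3 : -(B1 + B2) ≤ min (u₁ (y, s)) (u₂ (y, s)) := le_min (by linarith) (by linarith)
      simp only [hw, hg] at hval
      rw [h, mul_div_assoc, div_self hT.ne', mul_one, ← h] at hval
      have := le_abs_self m
      linarith
  have hnear : ∀ᶠ q : En n × ℝ in 𝓝 (y, s), w (y, s) ≤ w q := by
    have h1 : ∀ᶠ q : En n × ℝ in 𝓝 (y, s), 0 < q.2 :=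
      (continuous_snd.tendsto (y, s)).eventually_const_lt hspos
    have h2 : ∀ᶠ q : En n × ℝ in 𝓝 (y, s), q.2 < 2 * T :=
      (continuous_snd.tendsto (y, s)).eventually_lt_const hslt
    filter_upwards [h1, h2] with q a1 a2
    exact hglob q.1 q.2 a1.le a2.le
  have key : ∀ (H : En n → ℝ) (u uo : En n × ℝ → ℝ), H 0 = 0 →
      EvolSuperIneq (fun _ p => H p) u uo → (∀ q, min (u₁ q) (u₂ q) ≤ u q) →
      (u (y, s) = min (u₁ (y, s)) (u₂ (y, s))) → u (y, s) ≤ uo (y, s) → False := by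
    intro H u uo hH hsup hle heq hcmp
    set φ : En n × ℝ → ℝ := fun q => - g q.2 with hφ
    have hφC : ContDiff ℝ 1 φ := by
      rw [hφ, hg]; fun_prop
    have hloc : IsLocalMin (fun q => u q - φ q) (y, s) := by
      filter_upwards [hnear] with q hq
      simp only [hw, hφ] at hq ⊢
      rw [heq]
      linarith [hle q]
    have hv := hsup φ hφC y s hspos hloc
    have hgrad : gradient (fun y' => φ (y', s)) y = 0 := by
      simp only [hφ]
      exact gradient_const _ _
    have htime : fderiv ℝ φ (y, s) (0, 1) =
        -(σ * (((N + 1 : ℕ) : ℝ) * (s / T) ^ N * (1 / T))) := by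
      have h1 : HasDerivAt (fun s' : ℝ => (y, s')) ((0 : En n), (1 : ℝ)) s :=
        (hasDerivAt_const s y).prodMk (hasDerivAt_id s)
      have h2 := ((hφC.differentiable one_ne_zero) (y, s)).hasFDerivAt.comp_hasDerivAt s h1
      have h5 := (((((hasDerivAt_id s).div_const T).pow (N + 1)).const_mul σ)).neg
      have h6 := h2.unique h5
      rw [h6]
      simp
    simp only [hgrad, htime, hH] at hv
    have : 0 < σ * (((N + 1 : ℕ) : ℝ) * (s / T) ^ N * (1 / T)) := by positivity
    linarith
  rcases le_total (u₁ (y, s)) (u₂ (y, s)) with h | h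
  · exact key H₁ u₁ u₂ h01 hs1 (fun q => min_le_left _ _) (min_eq_left h).symm h
  · exact key H₂ u₂ u₁ h02 hs2 (fun q => min_le_right _ _) (min_eq_right h).symm h

def auxOS {n : ℕ} (u uo : En n × ℝ → ℝ) (b : En n) (C : ℝ) : Prop :=
  ∀ T R ε : ℝ, 0 ≤ R → 0 < ε → ∃ h₀ > 0, ∀ h, 0 < h → h ≤ h₀ → ∀ t, 0 ≤ t → t ≤ T →
    ∀ x v : En n, ‖v‖ ≤ R →
      u (x + h • (b + v), t + h) ≤ u (x, t) + h * (uo (x, t) - u (x, t) + ε + C * ‖v‖ ^ 2)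

lemma aux_os {n : ℕ} {H : En n → ℝ} {u uo : En n × ℝ → ℝ}
    (hsub : EvolSubIneq (fun _ p => H p) u uo)
    (hper : ZPeriodicST u) (hpero : ZPeriodicST uo)
    (hc : ContinuousOn u {q : En n × ℝ | 0 ≤ q.2})
    (hco : ContinuousOn uo {q : En n × ℝ | 0 ≤ q.2}) (b : En n) (C : ℝ)
    (hH : ∀ p v : En n, inner ℝ (b + v) p - C * ‖v‖ ^ 2 ≤ H p) : auxOS u uo b C := by
  intro T R ε hR hε
  obtain ⟨ρ1, hρ1, h1⟩ := aux_uc hper hc (T + 2) (ε / 2) (by positivity)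
  obtain ⟨ρ2, hρ2, h2⟩ := aux_uc hpero hco (T + 2) (ε / 2) (by positivity)
  set ρ := min ρ1 ρ2 with hρdef
  have hρ : 0 < ρ := lt_min hρ1 hρ2
  have hD : 0 < ‖b‖ + R + 1 := by positivity
  refine ⟨min 1 (ρ / (4 * (‖b‖ + R + 1))), by positivity, ?_⟩
  intro h hh hh0 t ht htT x v hv
  have hh1 : h ≤ 1 := hh0.trans (min_le_left _ _)
  have hh2 : h * (4 * (‖b‖ + R + 1)) ≤ ρ := by
    rw [← le_div_iff₀ (by positivity)]
    exact hh0.trans (min_le_right _ _)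
  refine aux_propag hsub hc b C hH t h (ρ / 2) _ ht hh (by positivity) x v ?_
  intro s y hs1 hs2 hy
  have hbv : ‖b + v‖ ≤ ‖b‖ + R := (norm_add_le _ _).trans (by linarith)
  have hst : |s - t| ≤ ρ := by
    rw [abs_of_nonneg (by linarith)]
    have := norm_nonneg b
    nlinarith
  have hyx : ‖y - x‖ ≤ ρ := by
    have e : y - x = (y - x - (s - t) • (b + v)) + (s - t) • (b + v) := by abel
    rw [e]
    refine (norm_add_le _ _).trans ?_
    rw [norm_smul, Real.norm_eq_abs, abs_of_nonneg (by linarith : (0 : ℝ) ≤ s - t)]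
    have h3 : (s - t) * ‖b + v‖ ≤ (2 * h) * (‖b‖ + R) :=
      mul_le_mul (by linarith) hbv (norm_nonneg _) (by linarith)
    nlinarith
  have e1 := h1 x y s t (by linarith) (by linarith) ht (by linarith)
    (hyx.trans (min_le_left _ _)) (hst.trans (min_le_left _ _))
  have e2 := h2 x y s t (by linarith) (by linarith) ht (by linarith)
    (hyx.trans (min_le_right _ _)) (hst.trans (min_le_right _ _))
  linarith [(abs_le.1 e1).1, (abs_le.1 e2).2]

lemma aux_step {n : ℕ} {u uo : En n × ℝ → ℝ} {b : En n} {C h ε R T t θ A Ao : ℝ} (hC : 0 ≤ C)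
    (hT : 0 < T) (hh : 0 < h) (hh1 : h ≤ 1) (W : Finset (En n)) (hW : ∀ w ∈ W, ‖w‖ ≤ R)
    (hos : ∀ x v : En n, ‖v‖ ≤ R / T →
      u (x + h • (b + v), t + h) ≤ u (x, t) + h * (uo (x, t) - u (x, t) + ε + C * ‖v‖ ^ 2))
    (hA : ∀ x, ∑ w ∈ W, u (x - θ • w, t) ≤ W.card * A)
    (hAo : ∀ x, ∑ w ∈ W, uo (x - θ • w, t) ≤ W.card * Ao) (x : En n) :
    ∑ w ∈ W, u (x - (θ - h / T) • w, t + h) ≤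
      W.card * ((1 - h) * A + h * Ao + h * (ε + C * (R / T) ^ 2)) := by
  set x' := x - h • b with hx'
  have h1 : ∀ w ∈ W, u (x - (θ - h / T) • w, t + h) ≤
      (1 - h) * u (x' - θ • w, t) + h * uo (x' - θ • w, t) + h * (ε + C * (R / T) ^ 2) := by
    intro w hw
    have hv : ‖T⁻¹ • w‖ ≤ R / T := by
      rw [norm_smul, Real.norm_eq_abs, abs_of_pos (by positivity), div_eq_inv_mul]
      exact mul_le_mul_of_nonneg_left (hW w hw) (by positivity)
    have h2 := hos (x' - θ • w) (T⁻¹ • w) hv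
    have e : x' - θ • w + h • (b + T⁻¹ • w) = x - (θ - h / T) • w := by
      rw [hx', smul_add, smul_smul, sub_smul, div_eq_mul_inv]
      abel
    rw [e] at h2
    have h3 : C * ‖T⁻¹ • w‖ ^ 2 ≤ C * (R / T) ^ 2 := by gcongr
    have h4 := mul_le_mul_of_nonneg_left h3 hh.le
    nlinarith
  refine (Finset.sum_le_sum h1).trans ?_
  rw [Finset.sum_add_distrib, Finset.sum_add_distrib, ← Finset.mul_sum, ← Finset.mul_sum,
    Finset.sum_const, nsmul_eq_mul]
  have h5 := mul_le_mul_of_nonneg_left (hA x') (by linarith : (0 : ℝ) ≤ 1 - h)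
  have h6 := mul_le_mul_of_nonneg_left (hAo x') hh.le
  linarith

lemma aux_main {n : ℕ} {u₁ u₂ : En n × ℝ → ℝ} {b₁ b₂ : En n} {C : ℝ} (hC : 0 ≤ C)
    (os1 : auxOS u₁ u₂ b₁ C) (os2 : auxOS u₂ u₁ b₂ C) (W : Finset (En n)) (hWne : W.Nonempty)
    (R : ℝ) (hR : 0 ≤ R) (hW : ∀ w ∈ W, ‖w‖ ≤ R) (t₀ T a₁ a₂ : ℝ) (ht₀ : 0 ≤ t₀) (hT : 0 < T)
    (h1 : ∀ x, ∑ w ∈ W, u₁ (x - w, t₀) ≤ W.card * a₁)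
    (h2 : ∀ x, ∑ w ∈ W, u₂ (x - w, t₀) ≤ W.card * a₂) (x : En n) :
    u₁ (x, t₀ + T) ≤ (a₁ + a₂) / 2 + (a₁ - a₂) / 2 * Real.exp (-2 * T) + C * R ^ 2 / T ∧
    u₂ (x, t₀ + T) ≤ (a₁ + a₂) / 2 - (a₁ - a₂) / 2 * Real.exp (-2 * T) + C * R ^ 2 / T := by
  have hcard : (0 : ℝ) < W.card := by exact_mod_cast hWne.card_pos
  have main : ∀ ε > 0, ∀ᶠ k : ℕ in atTop,
      u₁ (x, t₀ + T) ≤ (a₁ + a₂) / 2 + (a₁ - a₂) / 2 * (1 + (-2 * T) / k) ^ k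
        + T * (ε + C * (R / T) ^ 2) ∧
      u₂ (x, t₀ + T) ≤ (a₁ + a₂) / 2 - (a₁ - a₂) / 2 * (1 + (-2 * T) / k) ^ k
        + T * (ε + C * (R / T) ^ 2) := by
    intro ε hε
    obtain ⟨g1, hg1, hs1⟩ := os1 (t₀ + T) (R / T) ε (by positivity) hε
    obtain ⟨g2, hg2, hs2⟩ := os2 (t₀ + T) (R / T) ε (by positivity) hε
    have hlim : Tendsto (fun k : ℕ => T / (k : ℝ)) atTop (𝓝 0) :=
      tendsto_const_div_atTop_nhds_zero_nat T
    filter_upwards [hlim.eventually_le_const hg1, hlim.eventually_le_const hg2,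
      hlim.eventually_le_const one_pos, eventually_gt_atTop 0] with k k1 k2 k3 k4
    have hk : (0 : ℝ) < k := by exact_mod_cast k4
    set h := T / (k : ℝ) with hh
    have hhpos : 0 < h := by positivity
    have hhk : (k : ℝ) * h = T := by rw [hh]; field_simp
    have hhT : h / T = 1 / k := by rw [hh]; field_simp
    set e := ε + C * (R / T) ^ 2 with he
    have ind : ∀ j : ℕ, j ≤ k →
        (∀ x, ∑ w ∈ W, u₁ (x - (1 - (j : ℝ) / k) • w, t₀ + j * h) ≤
          W.card * ((a₁ + a₂) / 2 + (a₁ - a₂) / 2 * (1 - 2 * h) ^ j + j * h * e)) ∧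
        (∀ x, ∑ w ∈ W, u₂ (x - (1 - (j : ℝ) / k) • w, t₀ + j * h) ≤
          W.card * ((a₁ + a₂) / 2 - (a₁ - a₂) / 2 * (1 - 2 * h) ^ j + j * h * e)) := by
      intro j
      induction j with
      | zero =>
        intro _
        constructor
        · intro x
          have := h1 x
          simp only [Nat.cast_zero, zero_div, sub_zero, one_smul, zero_mul, add_zero, pow_zero,
            mul_one]
          convert this using 2
          ring
        · intro x
          have := h2 x
          simp only [Nat.cast_zero, zero_div, sub_zero, one_smul, zero_mul, add_zero, pow_zero,
            mul_one]
          convert this using 2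
          ring
      | succ j ih =>
        intro hj
        obtain ⟨i1, i2⟩ := ih (by omega)
        have hjk : (j : ℝ) ≤ k := by exact_mod_cast (by omega : j ≤ k)
        have hjT : t₀ + j * h ≤ t₀ + T := by
          have := mul_le_mul_of_nonneg_right hjk hhpos.le
          linarith
        have hj0 : 0 ≤ t₀ + j * h := by positivity
        have et : t₀ + ((j + 1 : ℕ) : ℝ) * h = t₀ + j * h + h := by push_cast; ring
        have eθ : 1 - ((j + 1 : ℕ) : ℝ) / k = 1 - (j : ℝ) / k - h / T := by
          rw [hhT]; push_cast; ring
        rw [et, eθ]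
        constructor
        · intro x
          refine (aux_step hC hT hhpos k3 W hW (hs1 h hhpos k1 _ hj0 hjT) i1 i2 x).trans
            (le_of_eq ?_)
          push_cast
          rw [← he]
          ring
        · intro x
          refine (aux_step hC hT hhpos k3 W hW (hs2 h hhpos k2 _ hj0 hjT) i2 i1 x).trans
            (le_of_eq ?_)
          push_cast
          rw [← he]
          ring
    obtain ⟨f1, f2⟩ := ind k le_rfl
    have f1 := f1 x
    have f2 := f2 x
    rw [div_self hk.ne', hhk] at f1 f2
    simp only [sub_self, zero_smul, sub_zero, Finset.sum_const, nsmul_eq_mul] at f1 f2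
    have f1 := le_of_mul_le_mul_left f1 hcard
    have f2 := le_of_mul_le_mul_left f2 hcard
    have e3 : 1 + -2 * T / (k : ℝ) = 1 - 2 * h := by rw [hh]; ring
    rw [e3]
    exact ⟨f1, f2⟩
  have hexp := Real.tendsto_one_add_div_pow_exp (-2 * T)
  have hCR : T * (C * (R / T) ^ 2) = C * R ^ 2 / T := by field_simp
  constructor
  · refine le_of_forall_pos_le_add fun δ hδ => ?_
    have h3 := main (δ / T) (by positivity)
    have h4 := ((hexp.const_mul ((a₁ - a₂) / 2)).const_add ((a₁ + a₂) / 2)).add_const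
      (T * (δ / T + C * (R / T) ^ 2))
    have h5 := ge_of_tendsto h4 (h3.mono fun k hk => hk.1)
    have h6 : T * (δ / T) = δ := by field_simp
    rw [mul_add, h6, hCR] at h5
    linarith
  · refine le_of_forall_pos_le_add fun δ hδ => ?_
    have h3 := main (δ / T) (by positivity)
    have h4 := ((hexp.const_mul ((a₁ - a₂) / 2)).const_sub ((a₁ + a₂) / 2)).add_const
      (T * (δ / T + C * (R / T) ^ 2))
    have h5 := ge_of_tendsto h4 (h3.mono fun k hk => hk.2)
    have h6 : T * (δ / T) = δ := by field_simp
    rw [mul_add, h6, hCR] at h5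
    linarith

lemma aux_main0 {n : ℕ} {u₁ u₂ : En n × ℝ → ℝ} {b₁ b₂ : En n} {C : ℝ} (hC : 0 ≤ C)
    (os1 : auxOS u₁ u₂ b₁ C) (os2 : auxOS u₂ u₁ b₂ C)
    (t₀ T a₁ a₂ : ℝ) (ht₀ : 0 ≤ t₀) (hT : 0 < T)
    (h1 : ∀ x, u₁ (x, t₀) ≤ a₁) (h2 : ∀ x, u₂ (x, t₀) ≤ a₂) (x : En n) :
    u₁ (x, t₀ + T) ≤ (a₁ + a₂) / 2 + (a₁ - a₂) / 2 * Real.exp (-2 * T) ∧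
    u₂ (x, t₀ + T) ≤ (a₁ + a₂) / 2 - (a₁ - a₂) / 2 * Real.exp (-2 * T) := by
  have := aux_main hC os1 os2 {0} (by simp) 0 le_rfl (by simp) t₀ T a₁ a₂ ht₀ hT
    (by intro x; simpa using h1 x) (by intro x; simpa using h2 x) x
  simpa using this

lemma aux_dip {n : ℕ} {u uo : En n × ℝ → ℝ} {b bo : En n} {C B M : ℝ} (hC : 0 ≤ C) (hB : 0 ≤ B)
    (os : auxOS u uo b C) (oso : auxOS uo u bo C) (hper : ZPeriodicST u)
    (hprop : ∀ t h, 0 ≤ t → 0 < h → ∀ x v : En n,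
      u (x + h • (b + v), t + h) ≤ u (x, t) + h * (2 * B + C * ‖v‖ ^ 2))
    (hup : ∀ η > 0, ∃ t₁, 0 ≤ t₁ ∧ ∀ t, t₁ ≤ t → ∀ x, u (x, t) ≤ M + η ∧ uo (x, t) ≤ M + η)
    (hlow : ∀ t, 0 ≤ t → ∀ A Ao, (∀ x, u (x, t) ≤ A) → (∀ x, uo (x, t) ≤ Ao) → 2 * M ≤ A + Ao)
    (κ : ℝ) (hκ : 0 < κ) : ∃ t₁, 0 ≤ t₁ ∧ ∀ t, t₁ ≤ t → ∀ x, M - κ ≤ u (x, t) := by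
  set τ := κ / (8 * (B + 1)) with hτ
  have hτpos : 0 < τ := by positivity
  have hτB : τ * (2 * B) ≤ κ / 4 := by
    have : τ * (8 * (B + 1)) = κ := by rw [hτ]; field_simp
    nlinarith
  set r := Real.sqrt (τ * κ / (4 * (C + 1))) with hr
  have hrpos : 0 < r := Real.sqrt_pos.2 (by positivity)
  have hr2 : C * r ^ 2 ≤ τ * κ / 4 := by
    have h1 : r ^ 2 = τ * κ / (4 * (C + 1)) := Real.sq_sqrt (by positivity)
    have h2 : r ^ 2 * (4 * (C + 1)) = τ * κ := by rw [h1]; field_simp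
    nlinarith [sq_nonneg r]
  obtain ⟨W', hW's, hW'f, hW'c⟩ := (isCompact_closedBall (0 : En n) n).finite_cover_balls hrpos
  set W := hW'f.toFinset with hWdef
  have hcov : ∀ z : En n, ‖z‖ ≤ n → ∃ w ∈ W, ‖z - w‖ < r := by
    intro z hz
    have := hW'c (mem_closedBall_zero_iff.2 hz)
    simp only [Set.mem_iUnion, Metric.mem_ball, dist_eq_norm] at this
    obtain ⟨w, hw, h⟩ := this
    exact ⟨w, by simpa [hWdef] using hw, h⟩
  have hWb : ∀ w ∈ W, ‖w‖ ≤ n := by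
    intro w hw
    exact mem_closedBall_zero_iff.1 (hW's (by simpa [hWdef] using hw))
  have hWne : W.Nonempty := by
    obtain ⟨w, hw, -⟩ := hcov 0 (by simp)
    exact ⟨w, hw⟩
  have hcard : (0 : ℝ) < W.card := by exact_mod_cast hWne.card_pos
  set c : ℝ := (W.card : ℝ) with hc
  set η := κ / (16 * c) with hη
  have hηpos : 0 < η := by positivity
  set T := 1 + 16 * C * (n : ℝ) ^ 2 * c / κ with hT
  have hTpos : 0 < T := by positivity
  have hTb : C * (n : ℝ) ^ 2 / T ≤ η := by
    rw [div_le_iff₀ hTpos, hη, hT]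
    have : κ / (16 * c) * (1 + 16 * C * (n : ℝ) ^ 2 * c / κ) = κ / (16 * c) + C * (n : ℝ) ^ 2 := by
      field_simp
    rw [this]
    have : 0 < κ / (16 * c) := by positivity
    linarith
  obtain ⟨t₁, ht₁, hup₁⟩ := hup η hηpos
  refine ⟨t₁, ht₁, ?_⟩
  intro t ht x₀
  by_contra hcon
  push Not at hcon
  have ht0 : 0 ≤ t := ht₁.trans ht
  have hball : ∀ y, ‖y - (x₀ + τ • b)‖ ≤ r → u (y, t + τ) ≤ M - κ / 2 := by
    intro y hy
    have h1 := hprop t τ ht0 hτpos x₀ (τ⁻¹ • (y - (x₀ + τ • b)))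
    have e : x₀ + τ • (b + τ⁻¹ • (y - (x₀ + τ • b))) = y := by
      rw [smul_add, smul_smul, mul_inv_cancel₀ hτpos.ne', one_smul]
      abel
    rw [e, norm_smul, Real.norm_eq_abs, abs_of_pos (by positivity), mul_pow] at h1
    have h2 : C * ‖y - (x₀ + τ • b)‖ ^ 2 ≤ τ * κ / 4 := by
      refine le_trans ?_ hr2
      gcongr
    have h3 : τ * (C * (τ⁻¹ ^ 2 * ‖y - (x₀ + τ • b)‖ ^ 2))
        = (C * ‖y - (x₀ + τ • b)‖ ^ 2) / τ := by field_simp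
    have h4 : (C * ‖y - (x₀ + τ • b)‖ ^ 2) / τ ≤ κ / 4 := by
      rw [div_le_iff₀ hτpos]; linarith
    rw [mul_add, h3] at h1
    linarith
  have ht2 : t₁ ≤ t + τ := by linarith
  have hsum1 : ∀ x, ∑ w ∈ W, u (x - w, t + τ) ≤ W.card * (M + η - κ / (2 * c)) := by
    intro x
    obtain ⟨k, hk⟩ := aux_cube n (x - (x₀ + τ • b))
    obtain ⟨w₀, hw₀, hd⟩ := hcov _ hk
    have h1 : u (x - w₀, t + τ) ≤ M - κ / 2 := by
      rw [← hper (x - w₀) k]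
      apply hball
      refine le_of_eq_of_le ?_ hd.le
      congr 1
      abel
    rw [← Finset.add_sum_erase W _ hw₀]
    have h2 : ∑ w ∈ W.erase w₀, u (x - w, t + τ) ≤ ∑ w ∈ W.erase w₀, (M + η) :=
      Finset.sum_le_sum fun w _ => (hup₁ (t + τ) ht2 _).1
    have h3 : ∑ w ∈ W.erase w₀, (M + η) + (M + η) = c * (M + η) := by
      rw [Finset.sum_erase_add W (fun _ => M + η) hw₀, Finset.sum_const, nsmul_eq_mul]
    rw [← hc]
    have h4 : c * (M + η - κ / (2 * c)) = c * (M + η) - κ / 2 := by field_simp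
    rw [h4]
    linarith
  have hsum2 : ∀ x, ∑ w ∈ W, uo (x - w, t + τ) ≤ W.card * (M + η) := by
    intro x
    refine (Finset.sum_le_sum (g := fun _ => M + η) fun w _ => (hup₁ (t + τ) ht2 _).2).trans ?_
    rw [Finset.sum_const, nsmul_eq_mul]
  have hm := aux_main hC os oso W hWne n (by positivity) hWb (t + τ) T _ _ (by linarith) hTpos
    hsum1 hsum2
  have hfin := hlow (t + τ + T) (by linarith) _ _ (fun x => (hm x).1) (fun x => (hm x).2)
  have h5 : κ / (2 * c) = 8 * η := by rw [hη]; field_simp; ring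
  linarith

/-- Convergence Result 2 (Theorem 1.2): for `x`-independent, uniformly convex
Hamiltonians with `Hᵢ(0) = 0`, solutions of (C) converge uniformly to a constant. -/
theorem stmt9 (n : ℕ) (hn : 1 ≤ n) (Hp₁ Hp₂ : En n → ℝ)
    (hH₁cont : Continuous Hp₁) (hH₂cont : Continuous Hp₂)
    (hH₁coer : CoerciveP Hp₁) (hH₂coer : CoerciveP Hp₂)
    (hA6₁ : UnifConvex Hp₁) (hA6₂ : UnifConvex Hp₂)
    (hA7₁ : Hp₁ 0 = 0) (hA7₂ : Hp₂ 0 = 0)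
    (u₀₁ u₀₂ : En n → ℝ) (hu₀₁ : IsLip u₀₁) (hu₀₂ : IsLip u₀₂)
    (hu₀₁per : ZPeriodic u₀₁) (hu₀₂per : ZPeriodic u₀₂)
    (u₁ u₂ : En n × ℝ → ℝ) (hu₁per : ZPeriodicST u₁) (hu₂per : ZPeriodicST u₂)
    (hsol : SysSolution (fun _ p => Hp₁ p) (fun _ p => Hp₂ p) u₀₁ u₀₂ u₁ u₂) :
    ∃ M : ℝ, UnifTendsTo u₁ (fun _ => M) ∧ UnifTendsTo u₂ (fun _ => M) := by
  obtain ⟨hc1, hc2, ⟨hsub1, hsub2⟩, ⟨hsup1, hsup2⟩, -, -⟩ := hsol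
  obtain ⟨b₁, C₁, hC₁, hb₁⟩ := aux_convex hH₁cont hA6₁ hA7₁
  obtain ⟨b₂, C₂, hC₂, hb₂⟩ := aux_convex hH₂cont hA6₂ hA7₂
  set C := C₁ + C₂ with hCdef
  have hC : 0 ≤ C := by positivity
  have hH₁ : ∀ p v : En n, inner ℝ (b₁ + v) p - C * ‖v‖ ^ 2 ≤ Hp₁ p := by
    intro p v
    have h1 := hb₁ p v
    have h2 : 0 ≤ C₂ * ‖v‖ ^ 2 := by positivity
    rw [hCdef, add_mul]
    linarith
  have hH₂ : ∀ p v : En n, inner ℝ (b₂ + v) p - C * ‖v‖ ^ 2 ≤ Hp₂ p := by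
    intro p v
    have h1 := hb₂ p v
    have h2 : 0 ≤ C₁ * ‖v‖ ^ 2 := by positivity
    rw [hCdef, add_mul]
    linarith
  have os1 := aux_os hsub1 hu₁per hu₂per hc1 hc2 b₁ C hH₁
  have os2 := aux_os hsub2 hu₂per hu₁per hc2 hc1 b₂ C hH₂
  -- global bounds
  obtain ⟨B1, hB10, hB1⟩ := aux_bdd hu₁per hc1 0
  obtain ⟨B2, hB20, hB2⟩ := aux_bdd hu₂per hc2 0
  set B := B1 + B2 with hBdef
  have hB0 : 0 ≤ B := by positivity
  have i1 : ∀ x, |u₁ (x, 0)| ≤ B := fun x => (hB1 x 0 le_rfl le_rfl).trans (by linarith)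
  have i2 : ∀ x, |u₂ (x, 0)| ≤ B := fun x => (hB2 x 0 le_rfl le_rfl).trans (by linarith)
  have hbd : ∀ t, 0 ≤ t → ∀ x, |u₁ (x, t)| ≤ B ∧ |u₂ (x, t)| ≤ B := by
    intro t ht x
    rcases lt_or_eq_of_le ht with h | h
    · have hl := aux_lower hA7₁ hA7₂ hsup1 hsup2 hu₁per hu₂per hc1 hc2 (-B)
        (fun x => (abs_le.1 (i1 x)).1) (fun x => (abs_le.1 (i2 x)).1) t h x
      have hu := aux_main0 hC os1 os2 0 t B B le_rfl h
        (fun x => (abs_le.1 (i1 x)).2) (fun x => (abs_le.1 (i2 x)).2) x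
      simp only [zero_add, sub_self, zero_div, zero_mul, add_zero, sub_zero] at hu
      rw [le_min_iff] at hl
      refine ⟨abs_le.2 ⟨hl.1, by linarith [hu.1]⟩, abs_le.2 ⟨hl.2, by linarith [hu.2]⟩⟩
    · subst h
      exact ⟨i1 x, i2 x⟩
  have hprop1 : ∀ t h, 0 ≤ t → 0 < h → ∀ x v : En n,
      u₁ (x + h • (b₁ + v), t + h) ≤ u₁ (x, t) + h * (2 * B + C * ‖v‖ ^ 2) := by
    intro t h ht hh x v
    refine aux_propag hsub1 hc1 b₁ C hH₁ t h 1 _ ht hh one_pos x v ?_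
    intro s y hs _ _
    have := hbd s (ht.trans hs) y
    linarith [(abs_le.1 this.1).1, (abs_le.1 this.2).2]
  have hprop2 : ∀ t h, 0 ≤ t → 0 < h → ∀ x v : En n,
      u₂ (x + h • (b₂ + v), t + h) ≤ u₂ (x, t) + h * (2 * B + C * ‖v‖ ^ 2) := by
    intro t h ht hh x v
    refine aux_propag hsub2 hc2 b₂ C hH₂ t h 1 _ ht hh one_pos x v ?_
    intro s y hs _ _
    have := hbd s (ht.trans hs) y
    linarith [(abs_le.1 this.1).2, (abs_le.1 this.2).1]
  -- suprema
  set G₁ : ℝ → ℝ := fun t => ⨆ x, u₁ (x, t) with hG₁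
  set G₂ : ℝ → ℝ := fun t => ⨆ x, u₂ (x, t) with hG₂
  have g1 : ∀ t, 0 ≤ t → ∀ x, u₁ (x, t) ≤ G₁ t := fun t ht x =>
    le_ciSup (f := fun x => u₁ (x, t))
      ⟨B, by rintro _ ⟨y, rfl⟩; exact (abs_le.1 (hbd t ht y).1).2⟩ x
  have g2 : ∀ t, 0 ≤ t → ∀ x, u₂ (x, t) ≤ G₂ t := fun t ht x =>
    le_ciSup (f := fun x => u₂ (x, t))
      ⟨B, by rintro _ ⟨y, rfl⟩; exact (abs_le.1 (hbd t ht y).2).2⟩ x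
  have l1 : ∀ t A, (∀ x, u₁ (x, t) ≤ A) → G₁ t ≤ A := fun t A h => ciSup_le h
  have l2 : ∀ t A, (∀ x, u₂ (x, t) ≤ A) → G₂ t ≤ A := fun t A h => ciSup_le h
  have gb1 : ∀ t, 0 ≤ t → |G₁ t| ≤ B := fun t ht => abs_le.2
    ⟨(abs_le.1 (hbd t ht 0).1).1.trans (g1 t ht 0), l1 t B fun x => (abs_le.1 (hbd t ht x).1).2⟩
  have gb2 : ∀ t, 0 ≤ t → |G₂ t| ≤ B := fun t ht => abs_le.2
    ⟨(abs_le.1 (hbd t ht 0).2).1.trans (g2 t ht 0), l2 t B fun x => (abs_le.1 (hbd t ht x).2).2⟩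
  set Sset : Set ℝ := (fun t => G₁ t + G₂ t) '' Set.Ici 0 with hSset
  have hSb : BddBelow Sset := by
    refine ⟨-(2 * B), ?_⟩
    rintro _ ⟨t, ht, rfl⟩
    have ht' : 0 ≤ t := ht
    simp only
    linarith [(abs_le.1 (gb1 t ht')).1, (abs_le.1 (gb2 t ht')).1]
  have hSne : Sset.Nonempty := ⟨_, 0, by simp, rfl⟩
  set L := sInf Sset with hL
  have hLle : ∀ t, 0 ≤ t → L ≤ G₁ t + G₂ t := fun t ht => csInf_le hSb ⟨t, ht, rfl⟩
  have hlow : ∀ t, 0 ≤ t → ∀ A Ao, (∀ x, u₁ (x, t) ≤ A) → (∀ x, u₂ (x, t) ≤ Ao) →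
      2 * (L / 2) ≤ A + Ao := by
    intro t ht A Ao hA hAo
    linarith [hLle t ht, l1 t A hA, l2 t Ao hAo]
  have hup : ∀ η > 0, ∃ t₁, 0 ≤ t₁ ∧ ∀ t, t₁ ≤ t → ∀ x,
      u₁ (x, t) ≤ L / 2 + η ∧ u₂ (x, t) ≤ L / 2 + η := by
    intro η hη
    obtain ⟨_, ⟨t₀, ht₀, rfl⟩, hlt⟩ := exists_lt_of_csInf_lt hSne
      (show sInf Sset < L + η by linarith)
    have ht₀' : 0 ≤ t₀ := ht₀
    simp only at hlt
    have hexp : Tendsto (fun T : ℝ => B * Real.exp (-2 * T)) atTop (𝓝 0) := by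
      have h1 : Tendsto (fun T : ℝ => -2 * T) atTop atBot :=
        tendsto_id.const_mul_atTop_of_neg (by norm_num)
      simpa using (Real.tendsto_exp_atBot.comp h1).const_mul B
    obtain ⟨T₀, hT₀⟩ := eventually_atTop.1 (hexp.eventually_le_const (half_pos hη))
    refine ⟨t₀ + max T₀ 1, by positivity, ?_⟩
    intro t ht x
    have hT1 : T₀ ≤ t - t₀ := by linarith [le_max_left T₀ 1]
    have hT2 : 0 < t - t₀ := by linarith [le_max_right T₀ 1]
    have hm := aux_main0 hC os1 os2 t₀ (t - t₀) _ _ ht₀' hT2 (g1 t₀ ht₀') (g2 t₀ ht₀') x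
    rw [add_sub_cancel] at hm
    have hE := hT₀ _ hT1
    have hEp := Real.exp_pos (-2 * (t - t₀))
    have hd := abs_le.1 (gb1 t₀ ht₀')
    have hd2 := abs_le.1 (gb2 t₀ ht₀')
    set E := Real.exp (-2 * (t - t₀)) with hEdef
    have e1 : (G₁ t₀ - G₂ t₀) / 2 * E ≤ B * E :=
      mul_le_mul_of_nonneg_right (by linarith) hEp.le
    have e2 : -((G₁ t₀ - G₂ t₀) / 2) * E ≤ B * E :=
      mul_le_mul_of_nonneg_right (by linarith) hEp.le
    rw [neg_mul] at e2
    constructor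
    · linarith [hm.1]
    · linarith [hm.2]
  have d1 := aux_dip hC hB0 os1 os2 hu₁per hprop1 hup hlow
  have d2 := aux_dip hC hB0 os2 os1 hu₂per hprop2
    (fun η hη => by
      obtain ⟨t₁, h1, h2⟩ := hup η hη
      exact ⟨t₁, h1, fun t ht x => (h2 t ht x).symm⟩)
    (fun t ht A Ao hA hAo => by
      have := hlow t ht Ao A hAo hA
      linarith)
  refine ⟨L / 2, ?_, ?_⟩
  · intro ε hε
    obtain ⟨t₁, -, h1⟩ := hup ε hε
    obtain ⟨t₂, -, h2⟩ := d1 ε hε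
    refine ⟨max t₁ t₂, fun t ht x => abs_le.2 ⟨?_, ?_⟩⟩
    · linarith [h2 t ((le_max_right _ _).trans ht) x]
    · linarith [(h1 t ((le_max_left _ _).trans ht) x).1]
  · intro ε hε
    obtain ⟨t₁, -, h1⟩ := hup ε hε
    obtain ⟨t₂, -, h2⟩ := d2 ε hε
    refine ⟨max t₁ t₂, fun t ht x => abs_le.2 ⟨?_, ?_⟩⟩
    · linarith [h2 t ((le_max_right _ _).trans ht) x]
    · linarith [(h1 t ((le_max_left _ _).trans ht) x).2]
end

section
/- Assume the Hamiltonians are independent of x, H_i(x,p) = H_i(p) for i = 1,2, with each H_i continuous, coercive, uniformly convex ((A6)) and satisfying H_i(0) = 0 ((A7)). Then (i) the ergodic constant of (E) equals 0; and (ii) the only Lipschitz continuous viscosity subsolutions of (E) with c = 0 are the constant pairs (a, a), a ∈ ℝ: if (v₁, v₂) is a pair of Lipschitz functions on 𝕋^n that is a viscosity subsolution of (E) with c = 0, then there is a ∈ ℝ with v₁ = v₂ ≡ a. -/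
open MeasureTheory Filter Topology Set

namespace S10

open Pointwise

lemma visc {n : ℕ} {H v w : En n → ℝ} (hH : Continuous H) (hv : Continuous v) (hw : Continuous w)
    (h : StatSubIneq (fun _ p => H p) 1 v w (fun _ => 0)) (x : En n)
    (hd : DifferentiableAt ℝ v x) : H (gradient v x) + (v x - w x) ≤ 0 := by
  set p := gradient v x with hp
  have hcont : Continuous (fun z : En n × En n => H z.1 + (v z.2 - w z.2)) := by fun_prop
  by_contra hcon
  push Not at hcon
  have hop : IsOpen {z : En n × En n | 0 < H z.1 + (v z.2 - w z.2)} :=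
    isOpen_lt continuous_const hcont
  obtain ⟨ε, hε, hball⟩ := Metric.isOpen_iff.1 hop (p, x) hcon
  -- differentiability
  set δ : ℝ := ε / 8 with hδ
  have hδ0 : 0 < δ := by positivity
  have hlo := (hd.hasFDerivAt).isLittleO.def hδ0
  obtain ⟨r0, hr0, hr⟩ := Metric.eventually_nhds_iff.1 hlo
  set r : ℝ := min (r0 / 2) (ε / 2) with hrdef
  have hrpos : 0 < r := by positivity
  have hrr0 : r < r0 := lt_of_le_of_lt (min_le_left _ _) (by linarith)
  have hrε : r < ε := lt_of_le_of_lt (min_le_right _ _) (by linarith)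
  set φ : En n → ℝ := fun y => inner ℝ p y + (2 * δ / r) * ‖y - x‖ ^ 2 with hφ
  have hφC : ContDiff ℝ 1 φ := by
    apply ContDiff.add
    · exact contDiff_const.inner ℝ contDiff_id
    · exact contDiff_const.mul ((contDiff_id.sub contDiff_const).norm_sq ℝ)
  have hgrad : ∀ y, gradient φ y = p + (4 * δ / r) • (y - x) := by
    intro y
    apply HasGradientAt.gradient
    rw [hasGradientAt_iff_hasFDerivAt]
    have h1 : HasFDerivAt (fun y : En n => inner ℝ p y) (innerSL ℝ p) y :=
      (innerSL ℝ p).hasFDerivAt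
    have h2 : HasFDerivAt (fun y : En n => ‖y - x‖ ^ 2) (2 • (innerSL ℝ (y - x))) y := by
      have := ((hasFDerivAt_id (𝕜 := ℝ) y).sub_const x).norm_sq
      simpa using this
    have h3 := h1.add (h2.const_mul (2 * δ / r))
    refine h3.congr_fderiv ?_
    ext z
    simp [inner_add_left, inner_smul_left]
    ring
  have hcomp : IsCompact (Metric.closedBall x r) := isCompact_closedBall x r
  obtain ⟨y, hy, hmax⟩ := hcomp.exists_isMaxOn ⟨x, Metric.mem_closedBall_self hrpos.le⟩
    (f := fun y => v y - φ y) ((hv.sub hφC.continuous).continuousOn)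
  have hyx := hmax (Metric.mem_closedBall_self hrpos.le)
  simp only [Set.mem_ofPred_eq, hφ, sub_self, norm_zero] at hyx
  have hyr : dist y x ≤ r := hy
  have hlin := hr (lt_of_le_of_lt hyr hrr0)
  rw [← inner_gradient_left, ← hp, inner_sub_right, Real.norm_eq_abs] at hlin
  have hlin2 := (abs_le.1 hlin).2
  have hnn : (2 * δ / r) * ‖y - x‖ ^ 2 ≤ δ * ‖y - x‖ := by nlinarith
  have hlt : ‖y - x‖ < r := by
    by_contra hge
    push Not at hge
    rw [dist_eq_norm] at hyr
    have : ‖y - x‖ = r := le_antisymm hyr hge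
    rw [this] at hnn
    have e : 2 * δ / r * r ^ 2 = 2 * (δ * r) := by field_simp
    nlinarith [mul_pos hδ0 hrpos]
  have hloc : IsLocalMax (fun y => v y - φ y) y :=
    hmax.isLocalMax (Metric.closedBall_mem_nhds_of_mem (by
      simpa [Metric.mem_ball, dist_eq_norm] using hlt))
  have key := h φ hφC y hloc
  simp only [hgrad, one_mul] at key
  have : ((p + (4 * δ / r) • (y - x)), y) ∈ Metric.ball (p, x) ε := by
    rw [Metric.mem_ball, Prod.dist_eq, max_lt_iff]
    constructor
    · simp only [dist_self_add_left, norm_smul, Real.norm_eq_abs]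
      rw [abs_of_pos (by positivity)]
      have : 4 * δ / r * ‖y - x‖ ≤ 4 * δ / r * r := by gcongr
      have e : 4 * δ / r * r = 4 * δ := by field_simp
      linarith
    · simp only [dist_eq_norm]; linarith
  have := hball this
  simp only [Set.mem_ofPred_eq] at this
  linarith

lemma tend {n : ℕ} {v : En n → ℝ} {K : NNReal} (hv : LipschitzWith K v) {s : Set (En n)}
    (hs : MeasurableSet s) (hfin : volume s ≠ ⊤) (w : En n) :
    Tendsto (fun t : ℝ => ∫ x in s, t⁻¹ • (v (x + t • w) - v x)) (𝓝[>] 0)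
      (𝓝 (∫ x in s, lineDeriv ℝ v x w)) := by
  have hg : Integrable (s.indicator (fun _ : En n => (1:ℝ))) volume :=
    (integrable_indicator_iff hs).2 (integrableOn_const hfin)
  have := hv.integral_inv_smul_sub_mul_tendsto_integral_lineDeriv_mul hg w
  have e : ∀ f : En n → ℝ, ∫ x, f x * s.indicator (fun _ : En n => (1:ℝ)) x = ∫ x in s, f x := by
    intro f
    rw [← integral_indicator hs]
    congr 1
    ext x
    by_cases hx : x ∈ s <;> simp [hx]
  simpa only [e] using this

lemma const_of_ae {n : ℕ} {v : En n → ℝ} {K : NNReal} (hv : LipschitzWith K v)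
    (h : ∀ w, ∀ᵐ x : En n, lineDeriv ℝ v x w = 0) (x y : En n) : v x = v y := by
  have hinv : ∀ w x, v (x + w) = v x := by
    intro w
    have hcont := hv.continuous
    have hD : Continuous (fun x => v (x + w) - v x) := by fun_prop
    have hz : ∀ s : Set (En n), IsCompact s → ∫ x in s, (v (x + w) - v x) = 0 := by
      intro s hs
      set F : ℝ → ℝ := fun t => ∫ x in s, v (x + t • w) with hF
      have hint : ∀ t : ℝ, IntegrableOn (fun x => v (x + t • w)) s := fun t =>
        ContinuousOn.integrableOn_compact hs (by fun_prop)
      have hFc : Continuous F :=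
        continuous_parametric_integral_of_continuous (by fun_prop) hs
      have hder : ∀ t ∈ Ico (0:ℝ) 1, HasDerivWithinAt F 0 (Ici t) t := by
        intro t _
        rw [← hasDerivWithinAt_Ioi_iff_Ici, hasDerivWithinAt_iff_tendsto_slope' (by simp)]
        have hvt : LipschitzWith K (fun x => v (x + t • w)) := by
          intro a b
          simpa using hv (a + t • w) (b + t • w)
        have hT := tend hvt hs.measurableSet hs.measure_lt_top.ne w
        have hz : ∫ x in s, lineDeriv ℝ (fun x => v (x + t • w)) x w = 0 := by
          have h1 : ∀ᵐ x : En n, lineDeriv ℝ v (x + t • w) w = 0 :=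
            (measurePreserving_add_right volume (t • w)).quasiMeasurePreserving.ae (h w)
          rw [integral_eq_zero_of_ae]
          apply ae_restrict_of_ae
          filter_upwards [h1] with x hx
          rw [Pi.zero_apply, ← hx]
          simp only [lineDeriv]
          congr 1
          ext u
          congr 1
          abel
        rw [hz] at hT
        have hsh : Tendsto (fun u : ℝ => u - t) (𝓝[>] t) (𝓝[>] 0) := by
          apply tendsto_nhdsWithin_of_tendsto_nhds_of_eventually_within
          · have : Tendsto (fun u : ℝ => u - t) (𝓝 t) (𝓝 (t - t)) :=
              (continuous_id.sub continuous_const).tendsto t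
            rw [sub_self] at this
            exact this.mono_left nhdsWithin_le_nhds
          · filter_upwards [self_mem_nhdsWithin] with u hu
            simpa using hu
        refine (hT.comp hsh).congr fun u => ?_
        simp only [Function.comp, slope, hF, vsub_eq_sub]
        rw [integral_smul, ← integral_sub (hint u) (hint t)]
        congr 2
        ext x
        congr 2
        rw [sub_smul]; abel
      have := constant_of_has_deriv_right_zero hFc.continuousOn hder 1 (by simp)
      rw [integral_sub]
      · simpa [hF, sub_eq_zero] using this
      · simpa [IntegrableOn] using hint 1
      · simpa [IntegrableOn] using hint 0
    have hae : ∀ᵐ x : En n, (fun x => v (x + w) - v x) x = 0 :=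
      ae_eq_zero_of_forall_setIntegral_isCompact_eq_zero' hD.locallyIntegrable hz
    have := Measure.eq_of_ae_eq (μ := volume) (g := fun _ => (0:ℝ)) hae hD continuous_const
    intro x
    have := congrFun this x
    linarith [this]
  have := hinv (x - y) y
  simpa using this

noncomputable abbrev bas (n : ℕ) := (EuclideanSpace.basisFun (Fin n) ℝ).toBasis
noncomputable abbrev FD (n : ℕ) : Set (En n) := ZSpan.fundamentalDomain (bas n)
noncomputable abbrev Lat (n : ℕ) := (Submodule.span ℤ (Set.range (bas n))).toAddSubgroup

lemma lat_intVec {n : ℕ} (g : Lat n) : ∃ k, (g : En n) = intVec n k := by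
  have hg := g.2
  rw [Submodule.mem_toAddSubgroup, Module.Basis.mem_span_iff_repr_mem] at hg
  choose k hk using hg
  refine ⟨k, ?_⟩
  ext i
  simpa [intVec] using (hk i).symm

lemma per_lat {n : ℕ} {v : En n → ℝ} (hv : ZPeriodic v) (g : Lat n) (x : En n) :
    v (g +ᵥ x) = v x := by
  obtain ⟨k, hk⟩ := lat_intVec g
  have : g +ᵥ x = x + intVec n k := by
    rw [← hk, add_comm]; rfl
  rw [this, hv]

instance (n : ℕ) : Countable (Lat n) :=
  inferInstanceAs (Countable (Submodule.span ℤ (Set.range (bas n))))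

lemma fd (n : ℕ) : IsAddFundamentalDomain (Lat n) (FD n) (volume : Measure (En n)) :=
  ZSpan.isAddFundamentalDomain' _ _

lemma fd_int {n : ℕ} {v : En n → ℝ} (hv : ZPeriodic v) (w : En n) :
    ∫ x in FD n, v (x + w) = ∫ x in FD n, v x := by
  have h2 : IsAddFundamentalDomain (Lat n) (w +ᵥ FD n) (volume : Measure (En n)) :=
    (fd n).vadd_of_comm w
  rw [(fd n).setIntegral_eq h2 (per_lat hv)]
  have := (measurePreserving_add_left (volume : Measure (En n)) w).setIntegral_image_emb
    (measurableEmbedding_addLeft w) v (FD n)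
  simp only [add_comm _ w]
  exact this.symm

lemma fd_fin (n : ℕ) : volume (FD n) ≠ ⊤ :=
  ((ZSpan.fundamentalDomain_isBounded (bas n)).measure_lt_top).ne

lemma int_on {n : ℕ} {v : En n → ℝ} (hv : Continuous v) : IntegrableOn v (FD n) := by
  have hb := (ZSpan.fundamentalDomain_isBounded (bas n))
  exact (hv.continuousOn.integrableOn_compact hb.isCompact_closure).mono_set subset_closure

lemma int_lineDeriv {n : ℕ} {v : En n → ℝ} {K : NNReal} (hv : LipschitzWith K v)
    (hp : ZPeriodic v) (w : En n) : ∫ x in FD n, lineDeriv ℝ v x w = 0 := by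
  have hm : MeasurableSet (FD n) := ZSpan.fundamentalDomain_measurableSet _
  have hcont := hv.continuous
  have hT := tend hv hm (fd_fin n) w
  refine tendsto_nhds_unique hT (tendsto_const_nhds.congr fun t => ?_)
  rw [integral_smul, integral_sub (int_on (v := fun x => v (x + t • w)) (by fun_prop))
    (int_on hcont), fd_int hp]
  simp

lemma convex_lb {n : ℕ} {H : En n → ℝ} (h : UnifConvex H) : ∃ α : ℝ, 0 < α ∧
    ∀ᵐ q : En n, ∃ ξ : En n, ∀ p, inner ℝ ξ p + (2 * H q - H (q + q)) + α * ‖p‖ ^ 2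
      - 2 * α * ‖q‖ ^ 2 ≤ H p := by
  obtain ⟨α, hα, h⟩ := h
  refine ⟨α / 2, by positivity, ?_⟩
  filter_upwards [h] with q hq
  refine ⟨gradient H q, fun p => ?_⟩
  have h1 := hq.2 (q + q)
  have h2 := hq.2 p
  rw [← inner_gradient_left] at h1 h2
  simp only [add_sub_cancel_right] at h1
  rw [inner_sub_right] at h2
  have h3 : ‖p‖ ≤ ‖p - q‖ + ‖q‖ := by simpa using norm_add_le (p - q) q
  have h4 : ‖p‖ ^ 2 ≤ 2 * ‖p - q‖ ^ 2 + 2 * ‖q‖ ^ 2 := by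
    nlinarith [norm_nonneg p, sq_nonneg (‖p - q‖ - ‖q‖)]
  have h5 : 0 ≤ α * ‖q‖ ^ 2 := by positivity
  nlinarith

lemma per_max {n : ℕ} {v : En n → ℝ} (hv : Continuous v) (hp : ZPeriodic v) :
    ∃ x, ∀ y, v y ≤ v x := by
  have hb := (ZSpan.fundamentalDomain_isBounded (bas n))
  have hne : (closure (FD n)).Nonempty :=
    ⟨_, subset_closure (ZSpan.fract_mem_fundamentalDomain (bas n) 0)⟩
  obtain ⟨x, _, hx⟩ := hb.isCompact_closure.exists_isMaxOn hne hv.continuousOn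
  refine ⟨x, fun y => ?_⟩
  obtain ⟨g, hg, _⟩ := ZSpan.exist_unique_vadd_mem_fundamentalDomain (bas n) y
  have := hx (subset_closure hg)
  rw [← per_lat hp g y]
  exact this

lemma const_sub {n : ℕ} {H v w : En n → ℝ} {c : ℝ} (h0 : H 0 = 0)
    (h : StatSubIneq (fun _ p => H p) 1 v w (fun _ => c)) (x : En n)
    (hx : ∀ y, v y ≤ v x) : v x - w x ≤ c := by
  have := h (fun _ => 0) contDiff_const x (Filter.Eventually.of_forall fun y => by
    simpa using hx y)
  simpa [h0] using this

lemma const_super {n : ℕ} {H v w : En n → ℝ} {c : ℝ} (h0 : H 0 = 0)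
    (h : StatSuperIneq (fun _ p => H p) 1 v w (fun _ => c)) (x : En n)
    (hx : ∀ y, v x ≤ v y) : c ≤ v x - w x := by
  have := h (fun _ => 0) contDiff_const x (Filter.Eventually.of_forall fun y => by
    simpa using hx y)
  simpa [h0] using this

lemma c_nonneg {n : ℕ} {H₁ H₂ v₁ v₂ : En n → ℝ} {c : ℝ} (h01 : H₁ 0 = 0) (h02 : H₂ 0 = 0)
    (c1 : Continuous v₁) (c2 : Continuous v₂) (p1 : ZPeriodic v₁) (p2 : ZPeriodic v₂)
    (h1 : StatSubIneq (fun _ p => H₁ p) 1 v₁ v₂ (fun _ => c))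
    (h2 : StatSubIneq (fun _ p => H₂ p) 1 v₂ v₁ (fun _ => c)) : 0 ≤ c := by
  obtain ⟨x, hx⟩ := per_max c1 p1
  obtain ⟨y, hy⟩ := per_max c2 p2
  have := const_sub h01 h1 x hx
  have := const_sub h02 h2 y hy
  linarith [hx y, hy x]

lemma c_nonpos {n : ℕ} {H₁ H₂ v₁ v₂ : En n → ℝ} {c : ℝ} (h01 : H₁ 0 = 0) (h02 : H₂ 0 = 0)
    (c1 : Continuous v₁) (c2 : Continuous v₂) (p1 : ZPeriodic v₁) (p2 : ZPeriodic v₂)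
    (h1 : StatSuperIneq (fun _ p => H₁ p) 1 v₁ v₂ (fun _ => c))
    (h2 : StatSuperIneq (fun _ p => H₂ p) 1 v₂ v₁ (fun _ => c)) : c ≤ 0 := by
  obtain ⟨x, hx⟩ := per_max (v := fun x => - v₁ x) (by fun_prop) (fun x k => by simp [p1 x k])
  obtain ⟨y, hy⟩ := per_max (v := fun x => - v₂ x) (by fun_prop) (fun x k => by simp [p2 x k])
  have := const_super h01 h1 x (fun z => by linarith [hx z])
  have := const_super h02 h2 y (fun z => by linarith [hy z])
  linarith [hx y, hy x]

lemma stat_zero {n : ℕ} {H : En n → ℝ} (h0 : H 0 = 0) :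
    StatSubIneq (fun _ p => H p) 1 (fun _ : En n => (0:ℝ)) (fun _ => 0) (fun _ => 0) ∧
    StatSuperIneq (fun _ p => H p) 1 (fun _ : En n => (0:ℝ)) (fun _ => 0) (fun _ => 0) := by
  constructor
  · intro φ hφ x hx
    have : fderiv ℝ φ x = 0 := by
      have := hx.fderiv_eq_zero
      simpa [fderiv_fun_neg] using this
    simp [gradient, this, h0]
  · intro φ hφ x hx
    have : fderiv ℝ φ x = 0 := by
      have := hx.fderiv_eq_zero
      simpa [fderiv_fun_neg] using this
    simp [gradient, this, h0]

lemma line_eq {n : ℕ} {v : En n → ℝ} {x : En n} (hd : DifferentiableAt ℝ v x) (w : En n) :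
    lineDeriv ℝ v x w = inner ℝ w (gradient v x) := by
  rw [hd.lineDeriv_eq_fderiv, ← inner_gradient_left, real_inner_comm]

lemma grad_int {n : ℕ} {v : En n → ℝ} {K : NNReal} (hv : LipschitzWith K v) :
    IntegrableOn (fun x => ‖gradient v x‖ ^ 2) (FD n) := by
  have e : ∀ x, ‖gradient v x‖ = ‖fderiv ℝ v x‖ := fun x => by simp [gradient]
  simp only [e]
  refine Measure.integrableOn_of_bounded (M := (K:ℝ) ^ 2) (fd_fin n)
    ((measurable_fderiv ℝ v).norm.pow_const 2).aestronglyMeasurable ?_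
  refine Filter.Eventually.of_forall fun x => ?_
  rw [Real.norm_eq_abs, abs_of_nonneg (by positivity)]
  gcongr
  exact norm_fderiv_le_of_lipschitz ℝ hv

lemma line_int {n : ℕ} {v : En n → ℝ} {K : NNReal} (hv : LipschitzWith K v) (w : En n) :
    IntegrableOn (fun x => lineDeriv ℝ v x w) (FD n) := by
  have hb := (ZSpan.fundamentalDomain_isBounded (bas n))
  exact ((hv.locallyIntegrable_lineDeriv w).integrableOn_isCompact hb.isCompact_closure).mono_set
    subset_closure

lemma grad_per {n : ℕ} {v : En n → ℝ} (hp : ZPeriodic v) (g : Lat n) (x : En n) :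
    gradient v (g +ᵥ x) = gradient v x := by
  have : (fun y => v (y + (g : En n))) = v := by
    ext y
    rw [add_comm]
    exact per_lat hp g y
  have h2 : fderiv ℝ v (x + (g : En n)) = fderiv ℝ v x := by
    rw [← fderiv_comp_add_right, this]
  have h3 : g +ᵥ x = x + (g : En n) := by rw [add_comm]; rfl
  rw [h3]
  simp only [gradient, h2]

lemma const_of_grad {n : ℕ} {v : En n → ℝ} {K : NNReal} (hv : LipschitzWith K v)
    (hp : ZPeriodic v) (h : ∀ᵐ x ∂(volume.restrict (FD n)), gradient v x = 0) (x y : En n) :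
    v x = v y := by
  have hm : MeasurableSet (FD n) := ZSpan.fundamentalDomain_measurableSet _
  have hall : ∀ᵐ x : En n, gradient v x = 0 := by
    rw [ae_iff]
    refine (fd n).measure_zero_of_invariant _ ?_ ?_
    · intro g
      ext x
      rw [mem_vadd_set_iff_neg_vadd_mem]
      simp only [Set.mem_ofPred_eq, grad_per hp]
    · rwa [ae_iff, Measure.restrict_apply' hm] at h
  refine const_of_ae hv (fun w => ?_) x y
  filter_upwards [hall, hv.ae_differentiableAt] with x h1 h2
  rw [line_eq h2, h1, inner_zero_right]

lemma main {n : ℕ} {H₁ H₂ v₁ v₂ : En n → ℝ} (hc1 : Continuous H₁) (hc2 : Continuous H₂)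
    (hu1 : UnifConvex H₁) (hu2 : UnifConvex H₂) (h01 : H₁ 0 = 0) (h02 : H₂ 0 = 0)
    {K₁ K₂ : NNReal} (l1 : LipschitzWith K₁ v₁) (l2 : LipschitzWith K₂ v₂)
    (p1 : ZPeriodic v₁) (p2 : ZPeriodic v₂)
    (s1 : StatSubIneq (fun _ p => H₁ p) 1 v₁ v₂ (fun _ => 0))
    (s2 : StatSubIneq (fun _ p => H₂ p) 1 v₂ v₁ (fun _ => 0)) :
    ∀ᵐ x ∂(volume.restrict (FD n)), gradient v₁ x = 0 ∧ gradient v₂ x = 0 := by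
  obtain ⟨α, hα, hL1⟩ := convex_lb hu1
  obtain ⟨β, hβ, hL2⟩ := convex_lb hu2
  set e : En n → ℝ := fun q => (2 * H₁ q - H₁ (q + q)) - 2 * α * ‖q‖ ^ 2 +
    ((2 * H₂ q - H₂ (q + q)) - 2 * β * ‖q‖ ^ 2) with he
  have hec : Continuous e := by fun_prop
  set G : En n → ℝ := fun x => α * ‖gradient v₁ x‖ ^ 2 + β * ‖gradient v₂ x‖ ^ 2 with hG
  have hGi : IntegrableOn G (FD n) :=
    ((grad_int l1).const_mul α).add ((grad_int l2).const_mul β)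
  have hae : ∀ᵐ q : En n, ∫ x in FD n, (G x + e q) ≤ 0 := by
    filter_upwards [hL1, hL2] with q ⟨ξ, hξ⟩ ⟨ζ, hζ⟩
    have hpt : ∀ᵐ x : En n, G x + e q ≤ -(lineDeriv ℝ v₁ x ξ + lineDeriv ℝ v₂ x ζ) := by
      filter_upwards [l1.ae_differentiableAt, l2.ae_differentiableAt] with x d1 d2
      have a1 := visc hc1 l1.continuous l2.continuous s1 x d1
      have a2 := visc hc2 l2.continuous l1.continuous s2 x d2
      rw [line_eq d1, line_eq d2]
      have b1 := hξ (gradient v₁ x)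
      have b2 := hζ (gradient v₂ x)
      simp only [hG, he]
      linarith
    have hi := (line_int l1 ξ).add (line_int l2 ζ)
    calc ∫ x in FD n, (G x + e q)
        ≤ ∫ x in FD n, -(lineDeriv ℝ v₁ x ξ + lineDeriv ℝ v₂ x ζ) :=
          integral_mono_ae (hGi.add (integrableOn_const (fd_fin n))) hi.neg
            (ae_restrict_of_ae hpt)
      _ = 0 := by
          rw [integral_neg, integral_add (line_int l1 ξ) (line_int l2 ζ),
            int_lineDeriv l1 p1, int_lineDeriv l2 p2]
          simp
  have hE : ∀ q, ∫ x in FD n, (G x + e q) = (∫ x in FD n, G x) + volume.real (FD n) * e q := by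
    intro q
    rw [integral_add hGi (integrableOn_const (fd_fin n))]
    simp
  have hcl : IsClosed {q | ∫ x in FD n, (G x + e q) ≤ 0} := by
    simp only [hE]
    exact isClosed_le (by fun_prop) continuous_const
  have hdense := Measure.dense_of_ae hae
  have h0 : (0 : En n) ∈ {q | ∫ x in FD n, (G x + e q) ≤ 0} := by
    rw [← hcl.closure_eq, hdense.closure_eq]; trivial
  have he0 : e 0 = 0 := by simp [he, h01, h02]
  simp only [Set.mem_ofPred_eq, he0, add_zero] at h0
  have hGn : ∀ x, 0 ≤ G x := fun x => by positivity
  have hz : ∫ x in FD n, G x = 0 := le_antisymm h0 (integral_nonneg hGn)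
  rw [integral_eq_zero_iff_of_nonneg hGn hGi] at hz
  filter_upwards [hz] with x hx
  simp only [hG, Pi.zero_apply] at hx
  have n1 : 0 ≤ α * ‖gradient v₁ x‖ ^ 2 := by positivity
  have n2 : 0 ≤ β * ‖gradient v₂ x‖ ^ 2 := by positivity
  constructor
  · have : α * ‖gradient v₁ x‖ ^ 2 = 0 := by linarith
    simpa [hα.ne'] using this
  · have : β * ‖gradient v₂ x‖ ^ 2 = 0 := by linarith
    simpa [hβ.ne'] using this

end S10


/-- Proposition 4.1: in Case 2 the ergodic constant is `0` and the only Lipschitz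
subsolutions of (E) with `c = 0` are the constant pairs `(a, a)`. -/
theorem stmt10 (n : ℕ) (hn : 1 ≤ n) (Hp₁ Hp₂ : En n → ℝ)
    (hH₁cont : Continuous Hp₁) (hH₂cont : Continuous Hp₂)
    (hH₁coer : CoerciveP Hp₁) (hH₂coer : CoerciveP Hp₂)
    (hA6₁ : UnifConvex Hp₁) (hA6₂ : UnifConvex Hp₂)
    (hA7₁ : Hp₁ 0 = 0) (hA7₂ : Hp₂ 0 = 0) :
    (∃ v₁ v₂ : En n → ℝ, ZPeriodic v₁ ∧ ZPeriodic v₂ ∧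
        ErgSolution (fun _ p => Hp₁ p) (fun _ p => Hp₂ p) v₁ v₂ 0) ∧
    (∀ (c : ℝ) (v₁ v₂ : En n → ℝ), ZPeriodic v₁ → ZPeriodic v₂ →
        ErgSolution (fun _ p => Hp₁ p) (fun _ p => Hp₂ p) v₁ v₂ c → c = 0) ∧
    (∀ v₁ v₂ : En n → ℝ, IsLip v₁ → IsLip v₂ → ZPeriodic v₁ → ZPeriodic v₂ →
        ErgSub (fun _ p => Hp₁ p) (fun _ p => Hp₂ p) v₁ v₂ 0 →
        ∃ a : ℝ, (∀ x, v₁ x = a) ∧ (∀ x, v₂ x = a)) := by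
  refine ⟨⟨fun _ => 0, fun _ => 0, fun _ _ => rfl, fun _ _ => rfl, continuous_const,
    continuous_const, ⟨(S10.stat_zero hA7₁).1, (S10.stat_zero hA7₂).1⟩,
    ⟨(S10.stat_zero hA7₁).2, (S10.stat_zero hA7₂).2⟩⟩, ?_, ?_⟩
  · rintro c v₁ v₂ p1 p2 ⟨c1, c2, ⟨a1, a2⟩, ⟨b1, b2⟩⟩
    exact le_antisymm (S10.c_nonpos hA7₁ hA7₂ c1 c2 p1 p2 b1 b2)
      (S10.c_nonneg hA7₁ hA7₂ c1 c2 p1 p2 a1 a2)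
  · rintro v₁ v₂ ⟨K₁, l1⟩ ⟨K₂, l2⟩ p1 p2 ⟨s1, s2⟩
    have hm := S10.main hH₁cont hH₂cont hA6₁ hA6₂ hA7₁ hA7₂ l1 l2 p1 p2 s1 s2
    have k1 := S10.const_of_grad l1 p1 (hm.mono fun _ h => h.1)
    have k2 := S10.const_of_grad l2 p2 (hm.mono fun _ h => h.2)
    have i1 := S10.const_sub hA7₁ s1 0 (fun y => (k1 y 0).le)
    have i2 := S10.const_sub hA7₂ s2 0 (fun y => (k2 y 0).le)
    have hE : v₂ 0 = v₁ 0 := by linarith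
    exact ⟨v₁ 0, fun x => k1 x 0, fun x => (k2 x 0).trans hE⟩
end

section
/- (Monotonicity of extrema.) Assume the Hamiltonians are independent of x, H_i(x,p) = H_i(p) for i = 1,2, with each H_i continuous, coercive, uniformly convex ((A6)) and satisfying H_i(0) = 0 ((A7)). Let (u₁, u₂) be the viscosity solution of (C) with Lipschitz continuous initial data. Define M(t) := max_{i=1,2} max_{x ∈ 𝕋^n} u_i(x,t) and m(t) := min_{i=1,2} min_{x ∈ 𝕋^n} u_i(x,t). Then t ↦ M(t) is nonincreasing and t ↦ m(t) is nondecreasing on [0,∞). -/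
open MeasureTheory Filter Topology Set

def TimeSub {n : ℕ} (u uo : En n × ℝ → ℝ) : Prop :=
  ∀ g : ℝ → ℝ, ContDiff ℝ 1 g → ∀ (x₀ : En n) (t₀ : ℝ), 0 < t₀ →
    IsLocalMax (fun q : En n × ℝ => u q - g q.2) (x₀, t₀) →
    deriv g t₀ + u (x₀, t₀) - uo (x₀, t₀) ≤ 0

theorem fderiv_time {n : ℕ} (g : ℝ → ℝ) (hg : ContDiff ℝ 1 g) (x₀ : En n) (t₀ : ℝ) :
    fderiv ℝ (fun q : En n × ℝ => g q.2) (x₀, t₀) (0, 1) = deriv g t₀ := by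
  have h1 : HasDerivAt g (deriv g t₀) t₀ :=
    ((hg.differentiable (by norm_num)) t₀).hasDerivAt
  have h2 : HasFDerivAt (fun q : En n × ℝ => q.2) (ContinuousLinearMap.snd ℝ (En n) ℝ) (x₀, t₀) :=
    hasFDerivAt_snd
  have h3 := HasDerivAt.comp_hasFDerivAt (x₀, t₀) (h₂ := g) h1 h2
  have h4 : fderiv ℝ (fun q : En n × ℝ => g q.2) (x₀, t₀) = _ := h3.fderiv
  rw [h4]; simp

theorem timeSub_of_sub {n : ℕ} (H : En n → ℝ) (h0 : H 0 = 0) (u uo : En n × ℝ → ℝ)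
    (h : EvolSubIneq (fun _ p => H p) u uo) : TimeSub u uo := by
  intro g hg x₀ t₀ ht hm
  have := h (fun q => g q.2) (hg.comp contDiff_snd) x₀ t₀ ht hm
  rw [fderiv_time g hg] at this
  simpa [gradient_fun_const, h0] using this

theorem timeSub_of_super {n : ℕ} (H : En n → ℝ) (h0 : H 0 = 0) (u uo : En n × ℝ → ℝ)
    (h : EvolSuperIneq (fun _ p => H p) u uo) :
    TimeSub (fun q => - u q) (fun q => - uo q) := by
  intro g hg x₀ t₀ ht hm
  have hm' : IsLocalMin (fun q : En n × ℝ => u q - (fun t => - g t) q.2) (x₀, t₀) := by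
    have := hm.neg
    refine this.congr (Eventually.of_forall fun q => ?_)
    simp only []; ring
  have := h (fun q => (fun t => - g t) q.2) (hg.neg.comp contDiff_snd) x₀ t₀ ht hm'
  rw [fderiv_time (fun t => - g t) hg.neg, deriv.fun_neg] at this
  simp only [gradient_fun_const, h0] at this
  simp only []
  linarith

def unitCube (n : ℕ) : Set (En n) := (WithLp.toLp 2) '' (Set.Icc (0 : Fin n → ℝ) 1)

theorem unitCube_compact (n : ℕ) : IsCompact (unitCube n) :=
  isCompact_Icc.image (PiLp.continuous_toLp 2 _)

theorem unitCube_red {n : ℕ} (x : En n) : ∃ k : Fin n → ℤ, x + intVec n k ∈ unitCube n := by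
  refine ⟨fun i => - ⌊x i⌋, fun i => Int.fract (x i), ⟨fun i => Int.fract_nonneg _,
    fun i => (Int.fract_lt_one _).le⟩, ?_⟩
  ext i
  simp [intVec, Int.fract, sub_eq_add_neg]

theorem max_prin {n : ℕ} (u v : En n × ℝ → ℝ) (hup : ZPeriodicST u) (hvp : ZPeriodicST v)
    (huc : ContinuousOn u {q : En n × ℝ | 0 ≤ q.2})
    (hvc : ContinuousOn v {q : En n × ℝ | 0 ≤ q.2})
    (hu : TimeSub u v) (hv : TimeSub v u) (s t M : ℝ) (hs : 0 ≤ s) (hst : s ≤ t)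
    (hM : ∀ x, max (u (x, s)) (v (x, s)) ≤ M) (x : En n) :
    max (u (x, t)) (v (x, t)) ≤ M := by
  by_contra! hlt
  obtain ⟨ε, hε, hlt⟩ : ∃ ε > 0, M + ε < max (u (x, t)) (v (x, t)) :=
    ⟨(max (u (x, t)) (v (x, t)) - M) / 2, by linarith, by linarith⟩
  set w : En n × ℝ → ℝ := fun q => max (u q) (v q) with hw
  have hwp : ZPeriodicST w := fun x k t => by simp only [hw, hup x k t, hvp x k t]
  set K : Set (En n × ℝ) := unitCube n ×ˢ Icc s (t + 1) with hK
  have hKc : IsCompact K := (unitCube_compact n).prod isCompact_Icc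
  have hKsub : K ⊆ {q : En n × ℝ | 0 ≤ q.2} := fun q hq => hs.trans hq.2.1
  have hwc : ContinuousOn w K := (huc.mono hKsub).sup (hvc.mono hKsub)
  obtain ⟨B, hB⟩ := hKc.bddAbove_image hwc
  obtain ⟨k, hk⟩ : ∃ k : ℝ, 0 < k ∧ B - M < ε * Real.exp k := by
    refine ⟨max 1 ((B - M) / ε), by positivity, ?_⟩
    have h1 := Real.add_one_le_exp (max 1 ((B - M) / ε))
    have h2 := le_max_right 1 ((B - M) / ε)
    have h3 : (B - M) / ε < Real.exp (max 1 ((B - M) / ε)) := by linarith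
    rw [div_lt_iff₀ hε] at h3
    linarith
  obtain ⟨hk0, hkB⟩ := hk
  set g : ℝ → ℝ := fun τ => ε * Real.exp (k * (τ - t)) with hg
  have hgc : ContDiff ℝ 1 g := by fun_prop
  have hgd : ∀ τ, 0 < deriv g τ := by
    intro τ
    have h1 : HasDerivAt (fun τ => k * (τ - t)) (k * 1) τ :=
      ((hasDerivAt_id τ).sub_const t).const_mul k
    have h2 : HasDerivAt g _ τ := h1.exp.const_mul ε
    rw [h2.deriv]; positivity
  have hgpos : ∀ τ, 0 < g τ := fun τ => by simp only [hg]; positivity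
  obtain ⟨j, hj⟩ := unitCube_red x
  have hxK : (x + intVec n j, t) ∈ K := ⟨hj, hst, by simp⟩
  obtain ⟨⟨y, τ⟩, hyK, hmax⟩ := hKc.exists_isMaxOn (f := fun q => w q - g q.2) ⟨_, hxK⟩
    (hwc.sub (hgc.continuous.comp continuous_snd).continuousOn)
  have hval : M < w (y, τ) - g τ := by
    have h1 := hmax hxK
    have h2 : g t = ε := by simp [hg]
    simp only [mem_ofPred_eq, hwp x j t, h2] at h1
    have : M + ε < w (x, t) := hlt
    linarith
  have hτs : s < τ := by
    rcases hyK.2.1.eq_or_lt with h | h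
    · have h' : s = τ := h
      have : w (y, τ) ≤ M := by rw [← h']; exact hM y
      linarith [hgpos τ]
    · exact h
  have hτt : τ < t + 1 := by
    rcases hyK.2.2.eq_or_lt with h | h
    · have h' : τ = t + 1 := h
      have h1 : w (y, τ) ≤ B := hB ⟨_, hyK, rfl⟩
      have h2 : g τ = ε * Real.exp k := by simp [hg, h']
      linarith
    · exact h
  have hloc : ∀ᶠ q : En n × ℝ in 𝓝 (y, τ), w q - g q.2 ≤ w (y, τ) - g τ := by
    have : ∀ᶠ q : En n × ℝ in 𝓝 (y, τ), q.2 ∈ Ioo s (t + 1) :=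
      continuous_snd.continuousAt.eventually (Ioo_mem_nhds hτs hτt)
    filter_upwards [this] with q hq
    obtain ⟨z, r⟩ := q
    obtain ⟨i, hi⟩ := unitCube_red z
    have h1 := hmax (show (z + intVec n i, r) ∈ K from ⟨hi, hq.1.le, hq.2.le⟩)
    simpa only [mem_ofPred_eq, hwp z i r] using h1
  have hτ0 : 0 < τ := hs.trans_lt hτs
  rcases le_total (u (y, τ)) (v (y, τ)) with h | h
  · have he : w (y, τ) = v (y, τ) := max_eq_right h
    have := hv g hgc y τ hτ0 (by
      filter_upwards [hloc] with q hq
      have : v q ≤ w q := le_max_right _ _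
      linarith)
    linarith [hgd τ]
  · have he : w (y, τ) = u (y, τ) := max_eq_left h
    have := hu g hgc y τ hτ0 (by
      filter_upwards [hloc] with q hq
      have : u q ≤ w q := le_max_left _ _
      linarith)
    linarith [hgd τ]

theorem bdd_slice {n : ℕ} (u v : En n × ℝ → ℝ) (hup : ZPeriodicST u) (hvp : ZPeriodicST v)
    (huc : ContinuousOn u {q : En n × ℝ | 0 ≤ q.2})
    (hvc : ContinuousOn v {q : En n × ℝ | 0 ≤ q.2}) (s : ℝ) (hs : 0 ≤ s) :
    ∃ B, ∀ x, max (u (x, s)) (v (x, s)) ≤ B := by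
  have hKc : IsCompact (unitCube n ×ˢ ({s} : Set ℝ)) := (unitCube_compact n).prod isCompact_singleton
  have hKsub : (unitCube n ×ˢ ({s} : Set ℝ)) ⊆ {q : En n × ℝ | 0 ≤ q.2} := by
    rintro ⟨a, b⟩ ⟨_, hb⟩
    simp only [mem_singleton_iff] at hb
    simpa [hb] using hs
  obtain ⟨B, hB⟩ := hKc.bddAbove_image ((huc.mono hKsub).sup (hvc.mono hKsub))
  refine ⟨B, fun x => ?_⟩
  obtain ⟨k, hk⟩ := unitCube_red x
  have h : max (u (x + intVec n k, s)) (v (x + intVec n k, s)) ≤ B := hB ⟨(x + intVec n k, s), ⟨hk, rfl⟩, rfl⟩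
  rwa [hup, hvp] at h

/-- Lemma 4.2: `M(t) = max_i max_x uᵢ(x,t)` is nonincreasing and
`m(t) = min_i min_x uᵢ(x,t)` is nondecreasing. -/
theorem stmt11 (n : ℕ) (hn : 1 ≤ n) (Hp₁ Hp₂ : En n → ℝ)
    (hH₁cont : Continuous Hp₁) (hH₂cont : Continuous Hp₂)
    (hH₁coer : CoerciveP Hp₁) (hH₂coer : CoerciveP Hp₂)
    (hA6₁ : UnifConvex Hp₁) (hA6₂ : UnifConvex Hp₂)
    (hA7₁ : Hp₁ 0 = 0) (hA7₂ : Hp₂ 0 = 0)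
    (u₀₁ u₀₂ : En n → ℝ) (hu₀₁ : IsLip u₀₁) (hu₀₂ : IsLip u₀₂)
    (hu₀₁per : ZPeriodic u₀₁) (hu₀₂per : ZPeriodic u₀₂)
    (u₁ u₂ : En n × ℝ → ℝ) (hu₁per : ZPeriodicST u₁) (hu₂per : ZPeriodicST u₂)
    (hsol : SysSolution (fun _ p => Hp₁ p) (fun _ p => Hp₂ p) u₀₁ u₀₂ u₁ u₂) :
    (∀ s t : ℝ, 0 ≤ s → s ≤ t →
      (⨆ x : En n, max (u₁ (x, t)) (u₂ (x, t))) ≤ ⨆ x : En n, max (u₁ (x, s)) (u₂ (x, s))) ∧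
    (∀ s t : ℝ, 0 ≤ s → s ≤ t →
      (⨅ x : En n, min (u₁ (x, s)) (u₂ (x, s))) ≤ ⨅ x : En n, min (u₁ (x, t)) (u₂ (x, t))) := by
  obtain ⟨hc1, hc2, hsub, hsup, -, -⟩ := hsol
  constructor
  · intro s t hs hst
    obtain ⟨B, hB⟩ := bdd_slice u₁ u₂ hu₁per hu₂per hc1 hc2 s hs
    have hbd : BddAbove (range fun x : En n => max (u₁ (x, s)) (u₂ (x, s))) :=
      ⟨B, by rintro _ ⟨x, rfl⟩; exact hB x⟩
    refine ciSup_le fun x => ?_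
    exact max_prin u₁ u₂ hu₁per hu₂per hc1 hc2 (timeSub_of_sub Hp₁ hA7₁ _ _ hsub.1)
      (timeSub_of_sub Hp₂ hA7₂ _ _ hsub.2) s t _ hs hst (fun y => le_ciSup hbd y) x
  · intro s t hs hst
    have hp1 : ZPeriodicST (fun q => - u₁ q) := fun x k t => by simp only [hu₁per x k t]
    have hp2 : ZPeriodicST (fun q => - u₂ q) := fun x k t => by simp only [hu₂per x k t]
    obtain ⟨B, hB⟩ := bdd_slice _ _ hp1 hp2 hc1.neg hc2.neg s hs
    have hbd : BddBelow (range fun x : En n => min (u₁ (x, s)) (u₂ (x, s))) :=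
      ⟨-B, by
        rintro _ ⟨x, rfl⟩
        have := hB x
        rw [max_neg_neg] at this
        simp only []
        linarith⟩
    refine le_ciInf fun x => ?_
    have := max_prin _ _ hp1 hp2 hc1.neg hc2.neg (timeSub_of_super Hp₁ hA7₁ _ _ hsup.1)
      (timeSub_of_super Hp₂ hA7₂ _ _ hsup.2) s t
      (- ⨅ x : En n, min (u₁ (x, s)) (u₂ (x, s))) hs hst (fun y => by
        have := ciInf_le hbd y
        rw [max_neg_neg]
        linarith) x
    rw [max_neg_neg] at this
    linarith
end
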